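/- arXiv:1906.00810 — 10 statements merged into one kernel-verified Lean document; each statement's English description precedes it below -/
import Mathlib

section
/- Let K ∈ ℝ^{M×M} be symmetric positive definite with smallest and largest eigenvalues λmin(K) and λmax(K), let ξ ≥ 0, set W_ξ = (ξ·Id + K)⁻¹, let L ∈ ℝ^{M×N}, y ∈ ℝ^M, and let Φ ⊆ ℝ^N be nonempty. If ẑ ∈ Φ satisfies ‖Lẑ − y‖_{W_ξ} ≤ ‖Lz − y‖_{W_ξ} for all z ∈ Φ, then for all z ∈ Φ: ‖Lẑ − y‖₂² ≤ ((ξ + λmax(K))/(ξ + λmin(K))) · ‖Lz − y‖₂². (Proposition 2.1, estimate (2.9a).) -/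
open Matrix

/-!
The eigenvalues of `W_ξ = (ξ • 1 + K)⁻¹` are the numbers `(ξ + λ)⁻¹` with `λ` an eigenvalue of `K`,
so in the Loewner order `(ξ + λmax)⁻¹ • 1 ≤ W_ξ ≤ (ξ + λmin)⁻¹ • 1`. Hence `‖·‖_{W_ξ}` and `‖·‖₂`
are equivalent, and a minimizer for the first is a minimizer for the second up to the quotient of
the two equivalence constants.
-/

section Spectrum

lemma inv_mem_spectrum_of_mem_spectrum_ringInverse {𝕜 A : Type*} [Semifield 𝕜] [Ring A]
    [Algebra 𝕜 A] {a : A} (ha : IsUnit a) {x : 𝕜} (hx : x ∈ spectrum 𝕜 (Ring.inverse a)) :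
    x⁻¹ ∈ spectrum 𝕜 a := by
  obtain ⟨u, rfl⟩ := ha
  rw [Ring.inverse_unit] at hx
  exact spectrum.inv₀_mem_iff.2 hx

variable {A : Type*} [TopologicalSpace A] [Ring A] [StarRing A] [PartialOrder A]
  [StarOrderedRing A] [Algebra ℝ A] [ContinuousFunctionalCalculus ℝ A IsSelfAdjoint]

lemma ringInverse_le_algebraMap_inv_of_le_spectrum {a : A} (ha : IsSelfAdjoint a) {r : ℝ}
    (hr : 0 < r) (h : ∀ x ∈ spectrum ℝ a, r ≤ x) :
    Ring.inverse a ≤ algebraMap ℝ A r⁻¹ := by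
  have ha_unit : IsUnit a := spectrum.isUnit_of_zero_notMem ℝ fun h0 ↦ hr.not_ge (h 0 h0)
  refine le_algebraMap_of_spectrum_le (ha := ha.ringInverse) fun x hx ↦ ?_
  exact le_inv_of_le_inv₀ hr (h _ (inv_mem_spectrum_of_mem_spectrum_ringInverse ha_unit hx))

lemma algebraMap_inv_le_ringInverse_of_spectrum_le {a : A} (ha : IsSelfAdjoint a) {r : ℝ}
    (hpos : ∀ x ∈ spectrum ℝ a, 0 < x) (h : ∀ x ∈ spectrum ℝ a, x ≤ r) :
    algebraMap ℝ A r⁻¹ ≤ Ring.inverse a := by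
  have ha_unit : IsUnit a := spectrum.isUnit_of_zero_notMem ℝ fun h0 ↦ (hpos 0 h0).false
  refine algebraMap_le_of_le_spectrum (ha := ha.ringInverse) fun x hx ↦ ?_
  have hx_inv : x⁻¹ ∈ spectrum ℝ a := inv_mem_spectrum_of_mem_spectrum_ringInverse ha_unit hx
  exact inv_le_of_inv_le₀ (inv_pos.1 (hpos _ hx_inv)) (h _ hx_inv)

end Spectrum

section LoewnerOrder

open RCLike
open scoped ComplexOrder MatrixOrder

variable {𝕜 n : Type*} [RCLike 𝕜] [Fintype n]

lemma re_star_dotProduct_mulVec_le_of_le {A B : Matrix n n 𝕜} (h : A ≤ B) (x : n → 𝕜) :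
    re (star x ⬝ᵥ A *ᵥ x) ≤ re (star x ⬝ᵥ B *ᵥ x) := by
  have hnonneg := (Matrix.le_iff.1 h).re_dotProduct_nonneg x
  rwa [sub_mulVec, dotProduct_sub, map_sub, sub_nonneg] at hnonneg

variable [DecidableEq n]

lemma re_star_dotProduct_smul_one_mulVec (a : ℝ) (x : n → 𝕜) :
    re (star x ⬝ᵥ (a • (1 : Matrix n n 𝕜)) *ᵥ x) = a * re (star x ⬝ᵥ x) := by
  rw [smul_mulVec, one_mulVec, dotProduct_smul, smul_re]

lemma re_star_dotProduct_self_le_of_sqrt_le {W : Matrix n n 𝕜} {a b : ℝ} (ha : 0 < a)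
    (haW : a • 1 ≤ W) (hWb : W ≤ b • 1) {x v : n → 𝕜}
    (h : √(re (star x ⬝ᵥ W *ᵥ x)) ≤ √(re (star v ⬝ᵥ W *ᵥ v))) :
    re (star x ⬝ᵥ x) ≤ b / a * re (star v ⬝ᵥ v) := by
  have lower (w : n → 𝕜) : a * re (star w ⬝ᵥ w) ≤ re (star w ⬝ᵥ W *ᵥ w) :=
    re_star_dotProduct_smul_one_mulVec a w ▸ re_star_dotProduct_mulVec_le_of_le haW w
  have upper (w : n → 𝕜) : re (star w ⬝ᵥ W *ᵥ w) ≤ b * re (star w ⬝ᵥ w) :=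
    re_star_dotProduct_smul_one_mulVec b w ▸ re_star_dotProduct_mulVec_le_of_le hWb w
  have form_nonneg : 0 ≤ re (star v ⬝ᵥ W *ᵥ v) :=
    (mul_nonneg ha.le (nonneg_iff.1 (dotProduct_star_self_nonneg v)).1).trans (lower v)
  rw [div_mul_eq_mul_div, le_div_iff₀' ha]
  calc a * re (star x ⬝ᵥ x) ≤ re (star x ⬝ᵥ W *ᵥ x) := lower x
    _ ≤ re (star v ⬝ᵥ W *ᵥ v) := (Real.sqrt_le_sqrt_iff form_nonneg).1 h
    _ ≤ b * re (star v ⬝ᵥ v) := upper v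

variable {K : Matrix n n 𝕜}

lemma spectrum_smul_one_add_eq_range_eigenvalues (hK : K.IsHermitian) (ξ : ℝ) :
    spectrum ℝ (ξ • 1 + K) = Set.range fun i ↦ ξ + hK.eigenvalues i := by
  rw [← Algebra.algebraMap_eq_smul_one, ← spectrum.singleton_add_eq,
    hK.spectrum_real_eq_range_eigenvalues, Set.singleton_add, ← Set.range_comp]
  rfl

variable {ξ : ℝ}

lemma add_eigenvalues_pos_of_posDef (hK : K.IsHermitian) (hA : (ξ • 1 + K).PosDef) (i : n) :
    0 < ξ + hK.eigenvalues i :=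
  hA.isStrictlyPositive.spectrum_pos <|
    spectrum_smul_one_add_eq_range_eigenvalues hK ξ ▸ Set.mem_range_self i

lemma add_iInf_eigenvalues_pos_of_posDef [Nonempty n] (hK : K.IsHermitian)
    (hA : (ξ • 1 + K).PosDef) : 0 < ξ + ⨅ i, hK.eigenvalues i := by
  obtain ⟨i, hi⟩ := exists_eq_ciInf_of_finite (f := hK.eigenvalues)
  exact hi ▸ add_eigenvalues_pos_of_posDef hK hA i

lemma inv_smul_one_add_le_inv_iInf_eigenvalues_smul_one [Nonempty n] (hK : K.IsHermitian)
    (hA : (ξ • 1 + K).PosDef) : (ξ • 1 + K)⁻¹ ≤ (ξ + ⨅ i, hK.eigenvalues i)⁻¹ • 1 := by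
  rw [nonsing_inv_eq_ringInverse, ← Algebra.algebraMap_eq_smul_one (A := Matrix n n 𝕜) (_ : ℝ)⁻¹]
  refine ringInverse_le_algebraMap_inv_of_le_spectrum hA.isHermitian
    (add_iInf_eigenvalues_pos_of_posDef hK hA) ?_
  rw [spectrum_smul_one_add_eq_range_eigenvalues hK, Set.forall_mem_range]
  exact fun i ↦ add_le_add_right (ciInf_le (Finite.bddBelow_range _) i) ξ

lemma inv_iSup_eigenvalues_smul_one_le_inv_smul_one_add (hK : K.IsHermitian)
    (hA : (ξ • 1 + K).PosDef) : (ξ + ⨆ i, hK.eigenvalues i)⁻¹ • 1 ≤ (ξ • 1 + K)⁻¹ := by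
  rw [nonsing_inv_eq_ringInverse, ← Algebra.algebraMap_eq_smul_one (A := Matrix n n 𝕜) (_ : ℝ)⁻¹]
  refine algebraMap_inv_le_ringInverse_of_spectrum_le hA.isHermitian
    (fun _ hx ↦ hA.isStrictlyPositive.spectrum_pos hx) ?_
  rw [spectrum_smul_one_add_eq_range_eigenvalues hK, Set.forall_mem_range]
  exact fun i ↦ add_le_add_right (le_ciSup (Finite.bddAbove_range _) i) ξ

theorem pbdw_background_euclidean_quasi_optimality_general [Nonempty n] (hK : K.IsHermitian)
    (hA : (ξ • 1 + K).PosDef) {α : Type*} (residual : α → n → 𝕜) {Φ : Set α} {zhat : α}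
    (hopt : IsMinOn
      (fun z ↦ √(re (star (residual z) ⬝ᵥ (ξ • 1 + K)⁻¹ *ᵥ residual z))) Φ zhat) :
    ∀ z ∈ Φ, re (star (residual zhat) ⬝ᵥ residual zhat) ≤
      (ξ + ⨆ i, hK.eigenvalues i) / (ξ + ⨅ i, hK.eigenvalues i) *
        re (star (residual z) ⬝ᵥ residual z) := by
  intro z hz
  have hmin : 0 < ξ + ⨅ i, hK.eigenvalues i := add_iInf_eigenvalues_pos_of_posDef hK hA
  have hmax : 0 < ξ + ⨆ i, hK.eigenvalues i := hmin.trans_le <|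
    add_le_add_right (ciInf_le_ciSup (Finite.bddBelow_range _) (Finite.bddAbove_range _)) ξ
  rw [← inv_div_inv]
  exact re_star_dotProduct_self_le_of_sqrt_le (inv_pos.2 hmax)
    (inv_iSup_eigenvalues_smul_one_le_inv_smul_one_add hK hA)
    (inv_smul_one_add_le_inv_iInf_eigenvalues_smul_one hK hA) (hopt hz)

end LoewnerOrder

/-- **Proposition 2.1, estimate (2.9a).**
Let K be symmetric positive definite with extreme eigenvalues λmin(K), λmax(K),
ξ ≥ 0, W_ξ = (ξ·Id + K)⁻¹, L ∈ ℝ^{M×N}, y ∈ ℝ^M and Φ ⊆ ℝ^N nonempty.  If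
ẑ ∈ Φ minimizes ‖Lz − y‖_{W_ξ} over Φ, then for all z ∈ Φ,
‖Lẑ − y‖₂² ≤ ((ξ + λmax(K))/(ξ + λmin(K))) · ‖Lz − y‖₂². -/
theorem pbdw_background_euclidean_quasi_optimality
    {M N : ℕ} (hM : 0 < M)
    (K : Matrix (Fin M) (Fin M) ℝ) (hK : K.PosDef)
    (ξ : ℝ) (hξ : 0 ≤ ξ)
    (L : Matrix (Fin M) (Fin N) ℝ) (y : Fin M → ℝ)
    (Φ : Set (Fin N → ℝ)) (hΦ : Φ.Nonempty)
    (zhat : Fin N → ℝ) (hmem : zhat ∈ Φ)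
    (hopt : ∀ z ∈ Φ,
      Real.sqrt ((L.mulVec zhat - y) ⬝ᵥ
          ((ξ • (1 : Matrix (Fin M) (Fin M) ℝ) + K)⁻¹).mulVec (L.mulVec zhat - y))
        ≤ Real.sqrt ((L.mulVec z - y) ⬝ᵥ
          ((ξ • (1 : Matrix (Fin M) (Fin M) ℝ) + K)⁻¹).mulVec (L.mulVec z - y))) :
    ∀ z ∈ Φ,
      (L.mulVec zhat - y) ⬝ᵥ (L.mulVec zhat - y)
        ≤ ((ξ + ⨆ i, hK.isHermitian.eigenvalues i) / (ξ + ⨅ i, hK.isHermitian.eigenvalues i))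
            * ((L.mulVec z - y) ⬝ᵥ (L.mulVec z - y)) := by
  have : Nonempty (Fin M) := Fin.pos_iff_nonempty.1 hM
  exact pbdw_background_euclidean_quasi_optimality_general hK.isHermitian
    (PosDef.posSemidef_add (PosSemidef.one.smul hξ) hK) (fun z ↦ L *ᵥ z - y) hopt
end

section
/- Let K ∈ ℝ^{M×M} be symmetric positive definite with smallest and largest eigenvalues λmin(K) and λmax(K), let ξ ≥ 0, set W_ξ = (ξ·Id + K)⁻¹, let L ∈ ℝ^{M×N}, y ∈ ℝ^M, and let Φ ⊆ ℝ^N be nonempty. If ẑ ∈ Φ satisfies ‖Lẑ − y‖_{W_ξ} ≤ ‖Lz − y‖_{W_ξ} for all z ∈ Φ, then for all z ∈ Φ: ‖Lẑ − y‖_{K⁻¹}² ≤ (λmax(K)/λmin(K)) · ((ξ + λmin(K))/(ξ + λmax(K))) · ‖Lz − y‖_{K⁻¹}². (Proposition 2.1, estimate (2.9b).) -/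
open Matrix

/-!
Let `m` and `R` be the extreme eigenvalues of `K`. The functional calculus turns the scalar
estimates `x⁻¹ ≤ (ξ + m) / m * (ξ + x)⁻¹` and `(ξ + x)⁻¹ ≤ R / (ξ + R) * x⁻¹`, valid for
`m ≤ x ≤ R`, into Loewner-order inequalities between `K⁻¹` and `W = (ξ + K)⁻¹`. Passing from the
`K⁻¹`-norm to the `W`-norm, in which `zhat` is optimal, and back costs the product of the two
constants.
-/

section Scalar

variable {F : Type*} [Field F] [LinearOrder F] [IsStrictOrderedRing F] {ξ x : F}

lemma inv_le_mul_inv_add {m : F} (hξ : 0 ≤ ξ) (hm : 0 < m) (hmx : m ≤ x) :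
    x⁻¹ ≤ (ξ + m) / m * (ξ + x)⁻¹ := by
  have hx : 0 < x := hm.trans_le hmx
  rw [← div_eq_mul_inv, div_div, inv_eq_one_div, div_le_div_iff₀ hx (by positivity)]
  linarith [mul_le_mul_of_nonneg_left hmx hξ]

lemma inv_add_le_mul_inv {R : F} (hξ : 0 ≤ ξ) (hx : 0 < x) (hxR : x ≤ R) :
    (ξ + x)⁻¹ ≤ R / (ξ + R) * x⁻¹ := by
  have hR : 0 < R := hx.trans_le hxR
  rw [← div_eq_mul_inv, div_div, inv_eq_one_div, div_le_div_iff₀ (by positivity) (by positivity)]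
  linarith [mul_le_mul_of_nonneg_left hxR hξ]

end Scalar

section FunctionalCalculus

open scoped Ring

variable {A : Type*} [Ring A] [StarRing A] [TopologicalSpace A] [Algebra ℝ A]
  [ContinuousFunctionalCalculus ℝ A IsSelfAdjoint] {a : A} {ξ : ℝ}

lemma cfc_inv_const_add (ha : IsSelfAdjoint a) (hne : ∀ x ∈ spectrum ℝ a, ξ + x ≠ 0) :
    cfc (fun x : ℝ ↦ (ξ + x)⁻¹) a = (algebraMap ℝ A ξ + a)⁻¹ʳ := by
  rw [cfc_inv _ a hne, cfc_const_add ξ (fun x ↦ x) a, cfc_id' ℝ a]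

variable [PartialOrder A] [StarOrderedRing A]

lemma ringInverse_algebraMap_add_le_smul_of_inv_le (ha : IsSelfAdjoint a) {η c : ℝ}
    (hξ : ∀ x ∈ spectrum ℝ a, ξ + x ≠ 0) (hη : ∀ x ∈ spectrum ℝ a, η + x ≠ 0)
    (hle : ∀ x ∈ spectrum ℝ a, (ξ + x)⁻¹ ≤ c * (η + x)⁻¹) :
    (algebraMap ℝ A ξ + a)⁻¹ʳ ≤ c • (algebraMap ℝ A η + a)⁻¹ʳ := by
  have hcont_ξ : ContinuousOn (fun x : ℝ ↦ (ξ + x)⁻¹) (spectrum ℝ a) :=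
    (continuousOn_const.add continuousOn_id).inv₀ hξ
  have hcont_η : ContinuousOn (fun x : ℝ ↦ (η + x)⁻¹) (spectrum ℝ a) :=
    (continuousOn_const.add continuousOn_id).inv₀ hη
  rw [← cfc_inv_const_add ha hξ, ← cfc_inv_const_add ha hη, ← cfc_const_mul c _ a hcont_η]
  exact cfc_mono hle hcont_ξ (hcont_η.const_mul c)

lemma ringInverse_le_smul_ringInverse_algebraMap_add (ha : IsSelfAdjoint a) (hξ : 0 ≤ ξ)
    {m : ℝ} (hm : 0 < m) (hspec : ∀ x ∈ spectrum ℝ a, m ≤ x) :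
    a⁻¹ʳ ≤ ((ξ + m) / m) • (algebraMap ℝ A ξ + a)⁻¹ʳ := by
  have hpos (x) (hx : x ∈ spectrum ℝ a) : 0 < x := hm.trans_le (hspec x hx)
  simpa only [map_zero, zero_add] using
    ringInverse_algebraMap_add_le_smul_of_inv_le (ξ := 0) ha
      (fun x hx ↦ by simpa only [zero_add] using (hpos x hx).ne')
      (fun x hx ↦ (add_pos_of_nonneg_of_pos hξ (hpos x hx)).ne')
      fun x hx ↦ by simpa only [zero_add] using inv_le_mul_inv_add hξ hm (hspec x hx)

lemma ringInverse_algebraMap_add_le_smul_ringInverse (ha : IsSelfAdjoint a) (hξ : 0 ≤ ξ)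
    (hpos : ∀ x ∈ spectrum ℝ a, 0 < x) {R : ℝ} (hspec : ∀ x ∈ spectrum ℝ a, x ≤ R) :
    (algebraMap ℝ A ξ + a)⁻¹ʳ ≤ (R / (ξ + R)) • a⁻¹ʳ := by
  simpa only [map_zero, zero_add] using
    ringInverse_algebraMap_add_le_smul_of_inv_le (η := 0) ha
      (fun x hx ↦ (add_pos_of_nonneg_of_pos hξ (hpos x hx)).ne')
      (fun x hx ↦ by simpa only [zero_add] using (hpos x hx).ne')
      fun x hx ↦ by simpa only [zero_add] using inv_add_le_mul_inv hξ (hpos x hx) (hspec x hx)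

end FunctionalCalculus

section Loewner

open scoped ComplexOrder MatrixOrder

variable {n 𝕜 : Type*} [Fintype n] [RCLike 𝕜]

lemma star_dotProduct_mulVec_le_of_le {A B : Matrix n n 𝕜} (h : A ≤ B) (v : n → 𝕜) :
    star v ⬝ᵥ A *ᵥ v ≤ star v ⬝ᵥ B *ᵥ v := by
  have hnonneg := (le_iff.mp h).dotProduct_mulVec_nonneg v
  rwa [sub_mulVec, dotProduct_sub, sub_nonneg] at hnonneg

variable [DecidableEq n] {K : Matrix n n 𝕜} {ξ : ℝ}

lemma iInf_eigenvalues_pos [Nonempty n] (hK : K.PosDef) :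
    0 < ⨅ i, hK.isHermitian.eigenvalues i := by
  obtain ⟨i, hi⟩ := exists_eq_ciInf_of_finite (f := hK.isHermitian.eigenvalues)
  exact hi ▸ hK.eigenvalues_pos i

lemma spectrum_subset_Icc_eigenvalues (hK : K.IsHermitian) :
    spectrum ℝ K ⊆ Set.Icc (⨅ i, hK.eigenvalues i) (⨆ i, hK.eigenvalues i) := by
  rw [hK.spectrum_real_eq_range_eigenvalues]
  rintro _ ⟨i, rfl⟩
  exact ⟨ciInf_le (Set.finite_range _).bddBelow i, le_ciSup (Set.finite_range _).bddAbove i⟩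

lemma inv_le_smul_inv_smul_one_add [Nonempty n] (hK : K.PosDef) (hξ : 0 ≤ ξ) :
    K⁻¹ ≤ ((ξ + ⨅ i, hK.isHermitian.eigenvalues i) / ⨅ i, hK.isHermitian.eigenvalues i) •
      (ξ • (1 : Matrix n n 𝕜) + K)⁻¹ := by
  rw [nonsing_inv_eq_ringInverse, nonsing_inv_eq_ringInverse, ← Algebra.algebraMap_eq_smul_one]
  exact ringInverse_le_smul_ringInverse_algebraMap_add hK.isHermitian hξ (iInf_eigenvalues_pos hK)
    fun x hx ↦ (spectrum_subset_Icc_eigenvalues hK.isHermitian hx).1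

lemma inv_smul_one_add_le_smul_inv (hK : K.PosDef) (hξ : 0 ≤ ξ) :
    (ξ • (1 : Matrix n n 𝕜) + K)⁻¹ ≤
      ((⨆ i, hK.isHermitian.eigenvalues i) / (ξ + ⨆ i, hK.isHermitian.eigenvalues i)) • K⁻¹ := by
  rw [nonsing_inv_eq_ringInverse, nonsing_inv_eq_ringInverse, ← Algebra.algebraMap_eq_smul_one]
  have hpos : ∀ x ∈ spectrum ℝ K, 0 < x := by
    rw [hK.isHermitian.spectrum_real_eq_range_eigenvalues]
    exact Set.forall_mem_range.mpr hK.eigenvalues_pos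
  exact ringInverse_algebraMap_add_le_smul_ringInverse hK.isHermitian hξ hpos
    fun x hx ↦ (spectrum_subset_Icc_eigenvalues hK.isHermitian hx).2

theorem pbdw_background_Kinv_quasi_optimality_general [Nonempty n] (hK : K.PosDef) (hξ : 0 ≤ ξ)
    {v w : n → 𝕜}
    (hvw : star v ⬝ᵥ (ξ • (1 : Matrix n n 𝕜) + K)⁻¹ *ᵥ v ≤
      star w ⬝ᵥ (ξ • (1 : Matrix n n 𝕜) + K)⁻¹ *ᵥ w) :
    star v ⬝ᵥ K⁻¹ *ᵥ v ≤
      (((⨆ i, hK.isHermitian.eigenvalues i) / (⨅ i, hK.isHermitian.eigenvalues i)) *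
        ((ξ + ⨅ i, hK.isHermitian.eigenvalues i) / (ξ + ⨆ i, hK.isHermitian.eigenvalues i))) •
        (star w ⬝ᵥ K⁻¹ *ᵥ w) := by
  set W := (ξ • (1 : Matrix n n 𝕜) + K)⁻¹
  set m := ⨅ i, hK.isHermitian.eigenvalues i
  set R := ⨆ i, hK.isHermitian.eigenvalues i
  have hm : 0 < m := iInf_eigenvalues_pos hK
  calc star v ⬝ᵥ K⁻¹ *ᵥ v
      ≤ star v ⬝ᵥ (((ξ + m) / m) • W) *ᵥ v :=
        star_dotProduct_mulVec_le_of_le (inv_le_smul_inv_smul_one_add hK hξ) v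
    _ = ((ξ + m) / m) • (star v ⬝ᵥ W *ᵥ v) := by rw [smul_mulVec, dotProduct_smul]
    _ ≤ ((ξ + m) / m) • (star w ⬝ᵥ W *ᵥ w) := by gcongr
    _ ≤ ((ξ + m) / m) • (star w ⬝ᵥ ((R / (ξ + R)) • K⁻¹) *ᵥ w) := by
        gcongr
        exact star_dotProduct_mulVec_le_of_le (inv_smul_one_add_le_smul_inv hK hξ) w
    _ = (R / m * ((ξ + m) / (ξ + R))) • (star w ⬝ᵥ K⁻¹ *ᵥ w) := by
        rw [smul_mulVec, dotProduct_smul, smul_smul]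
        congr 1
        ring

end Loewner

/-- **Proposition 2.1, estimate (2.9b).**
Let K be symmetric positive definite with extreme eigenvalues λmin(K), λmax(K),
ξ ≥ 0, W_ξ = (ξ·Id + K)⁻¹, L ∈ ℝ^{M×N}, y ∈ ℝ^M and Φ ⊆ ℝ^N nonempty.  If
ẑ ∈ Φ minimizes ‖Lz − y‖_{W_ξ} over Φ, then for all z ∈ Φ,
‖Lẑ − y‖_{K⁻¹}² ≤ (λmax(K)/λmin(K)) · ((ξ + λmin(K))/(ξ + λmax(K))) · ‖Lz − y‖_{K⁻¹}². -/
theorem pbdw_background_Kinv_quasi_optimality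
    {M N : ℕ} (hM : 0 < M)
    (K : Matrix (Fin M) (Fin M) ℝ) (hK : K.PosDef)
    (ξ : ℝ) (hξ : 0 ≤ ξ)
    (L : Matrix (Fin M) (Fin N) ℝ) (y : Fin M → ℝ)
    (Φ : Set (Fin N → ℝ)) (hΦ : Φ.Nonempty)
    (zhat : Fin N → ℝ) (hmem : zhat ∈ Φ)
    (hopt : ∀ z ∈ Φ,
      Real.sqrt ((L.mulVec zhat - y) ⬝ᵥ
          ((ξ • (1 : Matrix (Fin M) (Fin M) ℝ) + K)⁻¹).mulVec (L.mulVec zhat - y))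
        ≤ Real.sqrt ((L.mulVec z - y) ⬝ᵥ
          ((ξ • (1 : Matrix (Fin M) (Fin M) ℝ) + K)⁻¹).mulVec (L.mulVec z - y))) :
    ∀ z ∈ Φ,
      (L.mulVec zhat - y) ⬝ᵥ K⁻¹.mulVec (L.mulVec zhat - y)
        ≤ ((⨆ i, hK.isHermitian.eigenvalues i) / (⨅ i, hK.isHermitian.eigenvalues i))
            * ((ξ + ⨅ i, hK.isHermitian.eigenvalues i) / (ξ + ⨆ i, hK.isHermitian.eigenvalues i))
            * ((L.mulVec z - y) ⬝ᵥ K⁻¹.mulVec (L.mulVec z - y)) := by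
  intro z hz
  have : Nonempty (Fin M) := Fin.pos_iff_nonempty.mp hM
  have hW : ((ξ • (1 : Matrix (Fin M) (Fin M) ℝ) + K)⁻¹).PosSemidef :=
    ((PosSemidef.one.smul hξ).add hK.posSemidef).inv
  have hle := (Real.sqrt_le_sqrt_iff (hW.dotProduct_mulVec_nonneg _)).mp (hopt z hz)
  exact pbdw_background_Kinv_quasi_optimality_general hK hξ hle
end

section
/- Let K ∈ ℝ^{M×M} be symmetric positive definite, L ∈ ℝ^{M×N}, y ∈ ℝ^M, and let Φ ⊆ ℝ^N be nonempty and closed. Let (ξ_i)_{i≥1} be a sequence of positive reals with ξ_i → ∞, and for each i let ẑ_i ∈ Φ satisfy ‖Lẑ_i − y‖_{W_{ξ_i}} ≤ ‖Lz − y‖_{W_{ξ_i}} for all z ∈ Φ, where W_ξ = (ξ·Id + K)⁻¹. If z* is a cluster point of the sequence (ẑ_i), then z* ∈ Φ and ‖Lz* − y‖₂ ≤ ‖Lz − y‖₂ for all z ∈ Φ, i.e., z* solves the limit problem min_{z ∈ Φ} ‖Lz − y‖₂. (Corollary 2.2, statement (i).) -/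
open Matrix

/-!
Let `r z` be the residual `L z - y`. Minimisers of `‖r z‖_{W_ξ}` are also minimisers of
`‖r z‖_{ξ W_ξ} = √ξ ‖r z‖_{W_ξ}`. The rescaled weights `ξ W_ξ = (1 + ξ⁻¹ K)⁻¹` converge to the
identity as `ξ → ∞`, and the weighted norm is jointly continuous in the weight and the vector, so
minimality passes to cluster points.
-/

section PBDWLimit

open Filter Bornology Topology

variable {m ι Z : Type*} {l : Filter ι}

theorem isMinOn_of_mapClusterPt_of_tendsto {α : Type*} [TopologicalSpace Z] [TopologicalSpace α]
    [Preorder α] [OrderClosedTopology α] {f : ι → Z → α} {g : Z → α} {s : Set Z} {u : ι → Z} {a : Z}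
    (hfa : Tendsto (fun p : ι × Z => f p.1 p.2) (l ×ˢ 𝓝 a) (𝓝 (g a)))
    (hfs : ∀ z ∈ s, Tendsto (fun i => f i z) l (𝓝 (g z)))
    (hmin : ∀ᶠ i in l, IsMinOn (f i) s (u i)) (ha : MapClusterPt a l u) :
    IsMinOn g s a := by
  obtain ⟨U, hUl, hua⟩ := mapClusterPt_iff_ultrafilter.1 ha
  have hfu : Tendsto (fun i => f i (u i)) U (𝓝 (g a)) :=
    hfa.comp ((tendsto_id.mono_right hUl).prodMk hua)
  refine isMinOn_iff.2 fun z hz => le_of_tendsto_of_tendsto hfu ((hfs z hz).mono_left hUl) ?_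
  filter_upwards [hUl hmin] with i hi
  exact isMinOn_iff.1 hi z hz

section ShiftedInverse

variable [Fintype m] [DecidableEq m]

theorem smul_inv_smul_one_add {𝕜 : Type*} [Field 𝕜] {ξ : 𝕜} (hξ : ξ ≠ 0) (K : Matrix m m 𝕜) :
    ξ • (ξ • (1 : Matrix m m 𝕜) + K)⁻¹ = (1 + ξ⁻¹ • K)⁻¹ := by
  have h := spectrum.units_smul_resolvent_self (r := Units.mk0 ξ hξ) (a := -K)
  simpa [resolvent, nonsing_inv_eq_ringInverse, Algebra.algebraMap_eq_smul_one, Units.smul_def]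
    using h

theorem tendsto_smul_inv_smul_one_add_cobounded {𝕜 : Type*} [NormedField 𝕜] (K : Matrix m m 𝕜) :
    Tendsto (fun ξ : 𝕜 => ξ • (ξ • (1 : Matrix m m 𝕜) + K)⁻¹) (cobounded 𝕜) (𝓝 1) := by
  have hperturb : Tendsto (fun ξ : 𝕜 => 1 + ξ⁻¹ • K) (cobounded 𝕜) (𝓝 1) := by
    simpa using ((tendsto_inv₀_cobounded (α := 𝕜)).smul_const K).const_add (1 : Matrix m m 𝕜)
  have hinv : ContinuousAt Inv.inv (1 : Matrix m m 𝕜) :=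
    continuousAt_matrix_inv 1 (by simp [Ring.inverse_eq_inv', continuousAt_inv₀])
  have hlim : Tendsto (fun ξ : 𝕜 => (1 + ξ⁻¹ • K)⁻¹) (cobounded 𝕜) (𝓝 1) := by
    simpa [Function.comp_def] using hinv.tendsto.comp hperturb
  refine hlim.congr' ?_
  filter_upwards [eventually_ne_cobounded 0] with ξ hξ
  exact (smul_inv_smul_one_add hξ K).symm

end ShiftedInverse

section WeightedNorm

variable [Fintype m]

/-- The weighted norm `‖x‖_W = √(xᵀ W x)`. It is defined for every real square matrix `W` and is a
norm when `W` is positive definite; a negative value of `xᵀ W x` is sent to `0`. -/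
noncomputable def weightedNorm (W : Matrix m m ℝ) (x : m → ℝ) : ℝ :=
  √(x ⬝ᵥ W *ᵥ x)

theorem weightedNorm_one [DecidableEq m] (x : m → ℝ) : weightedNorm 1 x = √(x ⬝ᵥ x) := by
  rw [weightedNorm, one_mulVec]

theorem weightedNorm_smul {c : ℝ} (hc : 0 ≤ c) (W : Matrix m m ℝ) (x : m → ℝ) :
    weightedNorm (c • W) x = √c * weightedNorm W x := by
  rw [weightedNorm, smul_mulVec, dotProduct_smul, smul_eq_mul, Real.sqrt_mul hc, weightedNorm]

theorem continuous_weightedNorm :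
    Continuous fun p : Matrix m m ℝ × (m → ℝ) => weightedNorm p.1 p.2 := by
  unfold weightedNorm
  fun_prop

theorem tendsto_weightedNorm {W : ι → Matrix m m ℝ} {W₀ : Matrix m m ℝ} {x : ι → m → ℝ} {x₀ : m → ℝ}
    (hW : Tendsto W l (𝓝 W₀)) (hx : Tendsto x l (𝓝 x₀)) :
    Tendsto (fun i => weightedNorm (W i) (x i)) l (𝓝 (weightedNorm W₀ x₀)) :=
  (continuous_weightedNorm.tendsto (W₀, x₀)).comp (hW.prodMk_nhds hx)

theorem isMinOn_weightedNorm_of_mapClusterPt [TopologicalSpace Z] {c : ι → ℝ}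
    {W : ι → Matrix m m ℝ} {W₀ : Matrix m m ℝ} {r : Z → m → ℝ} {s : Set Z} {u : ι → Z} {a : Z}
    (hc : ∀ᶠ i in l, 0 ≤ c i) (hW : Tendsto (fun i => c i • W i) l (𝓝 W₀))
    (hr : ContinuousAt r a)
    (hmin : ∀ᶠ i in l, IsMinOn (fun z => weightedNorm (W i) (r z)) s (u i))
    (ha : MapClusterPt a l u) :
    IsMinOn (fun z => weightedNorm W₀ (r z)) s a := by
  refine isMinOn_of_mapClusterPt_of_tendsto (f := fun i z => weightedNorm (c i • W i) (r z))
    (tendsto_weightedNorm (hW.comp tendsto_fst) (hr.tendsto.comp tendsto_snd))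
    (fun z _ => tendsto_weightedNorm hW tendsto_const_nhds) ?_ ha
  filter_upwards [hc, hmin] with i hci hi
  simpa only [weightedNorm_smul hci, Function.comp_def] using
    hi.comp_mono (monotone_mul_left_of_nonneg (Real.sqrt_nonneg (c i)))

end WeightedNorm

theorem pbdw_limit_xi_to_infty_general [Fintype m] [DecidableEq m] [TopologicalSpace Z]
    (K : Matrix m m ℝ) {r : Z → m → ℝ} {Φ : Set Z} (hΦ : IsClosed Φ)
    {ξ : ι → ℝ} (hξ : Tendsto ξ l atTop) {zhat : ι → Z} (hmem : ∀ᶠ i in l, zhat i ∈ Φ)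
    (hopt : ∀ᶠ i in l,
      IsMinOn (fun z => weightedNorm (ξ i • (1 : Matrix m m ℝ) + K)⁻¹ (r z)) Φ (zhat i))
    {zstar : Z} (hr : ContinuousAt r zstar) (hcluster : MapClusterPt zstar l zhat) :
    zstar ∈ Φ ∧ IsMinOn (fun z => √(r z ⬝ᵥ r z)) Φ zstar := by
  have hweight : Tendsto (fun i => ξ i • (ξ i • (1 : Matrix m m ℝ) + K)⁻¹) l (𝓝 1) :=
    (tendsto_smul_inv_smul_one_add_cobounded K).comp
      (hξ.mono_right IsOrderBornology.atTop_le_cobounded)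
  refine ⟨hΦ.mem_of_mapClusterPt hcluster hmem, ?_⟩
  simpa only [weightedNorm_one] using
    isMinOn_weightedNorm_of_mapClusterPt (hξ.eventually_ge_atTop 0) hweight hr hopt hcluster

end PBDWLimit

/-- **Corollary 2.2, statement (i).**
Let ξ_i → ∞ and let ẑ_i ∈ Φ minimize ‖Lz − y‖_{W_{ξ_i}} over the nonempty
closed set Φ, where W_ξ = (ξ·Id + K)⁻¹.  Then any cluster point z* of (ẑ_i)
belongs to Φ and solves the limit problem min_{z ∈ Φ} ‖Lz − y‖₂. -/
theorem pbdw_limit_xi_to_infty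
    {M N : ℕ}
    (K : Matrix (Fin M) (Fin M) ℝ) (hK : K.PosDef)
    (L : Matrix (Fin M) (Fin N) ℝ) (y : Fin M → ℝ)
    (Φ : Set (Fin N → ℝ)) (hΦne : Φ.Nonempty) (hΦcl : IsClosed Φ)
    (ξ : ℕ → ℝ) (hξpos : ∀ i, 0 < ξ i)
    (hξlim : Filter.Tendsto ξ Filter.atTop Filter.atTop)
    (zhat : ℕ → Fin N → ℝ) (hmem : ∀ i, zhat i ∈ Φ)
    (hopt : ∀ i, ∀ z ∈ Φ,
      Real.sqrt ((L.mulVec (zhat i) - y) ⬝ᵥ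
          ((ξ i • (1 : Matrix (Fin M) (Fin M) ℝ) + K)⁻¹).mulVec (L.mulVec (zhat i) - y))
        ≤ Real.sqrt ((L.mulVec z - y) ⬝ᵥ
          ((ξ i • (1 : Matrix (Fin M) (Fin M) ℝ) + K)⁻¹).mulVec (L.mulVec z - y)))
    (zstar : Fin N → ℝ) (hcluster : MapClusterPt zstar Filter.atTop zhat) :
    zstar ∈ Φ ∧ ∀ z ∈ Φ,
      Real.sqrt ((L.mulVec zstar - y) ⬝ᵥ (L.mulVec zstar - y))
        ≤ Real.sqrt ((L.mulVec z - y) ⬝ᵥ (L.mulVec z - y)) := by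
  exact (pbdw_limit_xi_to_infty_general K (r := fun z => L *ᵥ z - y) hΦcl hξlim (.of_forall hmem)
    (.of_forall fun i => isMinOn_iff.2 (hopt i)) (by fun_prop) hcluster).imp_right isMinOn_iff.1
end

section
/- Let A: ℝ^M → U be a linear map, let ℓ: U → ℝ^M be a bounded linear map, and set A_ℓ = A ∘ ℓ: U → U. Suppose A_ℓ(u) = u for every u in the range of A. Then A_ℓ is idempotent, i.e., A_ℓ ∘ A_ℓ = A_ℓ; and if moreover A_ℓ ≠ 0 and A_ℓ ≠ id_U, then ‖id_U − A_ℓ‖ = ‖A_ℓ‖ in operator norm. (Lemma 3.1, part 2: for unbiased linear recovery algorithms, Λ_U(A) = ‖A_ℓ‖.) -/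
/-!
Write `x = u + v` with `u = P x` and `v = x - P x`. If both are nonzero, exchanging their lengths
while keeping their directions does not change the norm of the sum, so the vector
`w = (‖v‖ / ‖u‖) • u + (‖u‖ / ‖v‖) • v` satisfies `‖w‖ = ‖x‖` and `‖P w‖ = ‖v‖`. Hence
`‖x - P x‖ ≤ ‖P‖ * ‖x‖`; if `P x = 0`, this holds because `1 ≤ ‖P‖`. The reverse inequality is the
same statement for `1 - P`.
-/

theorem one_le_norm_of_isIdempotentElem {R : Type*} [NonUnitalNormedRing R] {p : R}
    (hp : IsIdempotentElem p) (hp_ne : p ≠ 0) : 1 ≤ ‖p‖ := by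
  have hp_le : ‖p‖ ≤ ‖p‖ * ‖p‖ := by simpa only [hp.eq] using norm_mul_le p p
  exact (le_mul_iff_one_le_left (norm_pos_iff.mpr hp_ne)).mp hp_le

theorem norm_norm_sq_smul_add_norm_sq_smul (𝕜 : Type*) {E : Type*} [RCLike 𝕜]
    [SeminormedAddCommGroup E] [InnerProductSpace 𝕜 E] (u v : E) :
    ‖(‖v‖ : 𝕜) ^ 2 • u + (‖u‖ : 𝕜) ^ 2 • v‖ = ‖u‖ * ‖v‖ * ‖u + v‖ := by
  rw [← sq_eq_sq₀ (by positivity) (by positivity), mul_pow, norm_add_sq (𝕜 := 𝕜),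
    norm_add_sq (𝕜 := 𝕜)]
  simp only [← RCLike.ofReal_pow, inner_smul_real_left, inner_smul_real_right, norm_smul,
    RCLike.norm_ofReal, abs_sq, RCLike.smul_re]
  ring

section IdempotentOperator

variable {𝕜 E : Type*} [RCLike 𝕜] [NormedAddCommGroup E] [InnerProductSpace 𝕜 E] {P : E →L[𝕜] E}

theorem norm_le_opNorm_mul_norm_add_of_apply_eq_self_of_apply_eq_zero {u v : E}
    (hPu : P u = u) (hPv : P v = 0) (hu : u ≠ 0) : ‖v‖ ≤ ‖P‖ * ‖u + v‖ := by
  rcases eq_or_ne v 0 with rfl | hv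
  · rw [norm_zero]
    positivity
  -- The exchange of lengths, multiplied through by `‖u‖ * ‖v‖` to avoid division.
  set w : E := (‖v‖ : 𝕜) ^ 2 • u + (‖u‖ : 𝕜) ^ 2 • v with hw
  have hPw : P w = (‖v‖ : 𝕜) ^ 2 • u := by simp [hw, hPu, hPv]
  have h_scaled : ‖u‖ * ‖v‖ * ‖v‖ ≤ ‖u‖ * ‖v‖ * (‖P‖ * ‖u + v‖) :=
    calc
      ‖u‖ * ‖v‖ * ‖v‖ = ‖P w‖ := by
        rw [hPw, norm_smul, norm_pow, RCLike.norm_ofReal, abs_norm]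
        ring
      _ ≤ ‖P‖ * ‖w‖ := P.le_opNorm w
      _ = ‖u‖ * ‖v‖ * (‖P‖ * ‖u + v‖) := by
        rw [hw, norm_norm_sq_smul_add_norm_sq_smul]
        ring
  exact le_of_mul_le_mul_left h_scaled (mul_pos (norm_pos_iff.mpr hu) (norm_pos_iff.mpr hv))

theorem opNorm_one_sub_le_of_isIdempotentElem (hP : IsIdempotentElem P) (hP_ne : P ≠ 0) :
    ‖1 - P‖ ≤ ‖P‖ := by
  refine ContinuousLinearMap.opNorm_le_bound _ (norm_nonneg P) fun x => ?_
  change ‖x - P x‖ ≤ ‖P‖ * ‖x‖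
  have hPP : P (P x) = P x := DFunLike.congr_fun hP x
  rcases eq_or_ne (P x) 0 with hPx | hPx
  · rw [hPx, sub_zero]
    exact le_mul_of_one_le_left (norm_nonneg x) (one_le_norm_of_isIdempotentElem hP hP_ne)
  · have hP_sub : P (x - P x) = 0 := by rw [map_sub, hPP, sub_self]
    simpa only [add_sub_cancel] using
      norm_le_opNorm_mul_norm_add_of_apply_eq_self_of_apply_eq_zero hPP hP_sub hPx

theorem opNorm_one_sub_of_isIdempotentElem (hP : IsIdempotentElem P) (hP_ne_zero : P ≠ 0)
    (hP_ne_one : P ≠ 1) : ‖1 - P‖ = ‖P‖ := by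
  refine le_antisymm (opNorm_one_sub_le_of_isIdempotentElem hP hP_ne_zero) ?_
  simpa only [sub_sub_cancel] using
    opNorm_one_sub_le_of_isIdempotentElem hP.one_sub (sub_ne_zero.mpr hP_ne_one.symm)

end IdempotentOperator

theorem perfect_algorithm_idempotent_norm_general
    {𝕜 U F : Type*} [RCLike 𝕜] [NormedAddCommGroup U] [InnerProductSpace 𝕜 U]
    [AddCommGroup F] [Module 𝕜 F] [TopologicalSpace F]
    (A : F →L[𝕜] U) (l : U →L[𝕜] F) (h : ∀ y : F, A (l (A y)) = A y) :
    (A.comp l).comp (A.comp l) = A.comp l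
    ∧ (A.comp l ≠ 0 → A.comp l ≠ ContinuousLinearMap.id 𝕜 U →
        ‖ContinuousLinearMap.id 𝕜 U - A.comp l‖ = ‖A.comp l‖) := by
  have h_idem : IsIdempotentElem (A.comp l) := ContinuousLinearMap.ext fun x => h (l x)
  exact ⟨h_idem, opNorm_one_sub_of_isIdempotentElem h_idem⟩

/-- **Lemma 3.1, part 2.**
Let A : ℝ^M → U be linear, ℓ : U → ℝ^M bounded linear, A_ℓ = A ∘ ℓ, and
suppose A_ℓ(u) = u for every u in the range of A.  Then A_ℓ is idempotent,
and if moreover A_ℓ ≠ 0 and A_ℓ ≠ id, then ‖id − A_ℓ‖ = ‖A_ℓ‖. -/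
theorem perfect_algorithm_idempotent_norm
    {U : Type*} [NormedAddCommGroup U] [InnerProductSpace ℝ U] [CompleteSpace U]
    {M : ℕ}
    (A : EuclideanSpace ℝ (Fin M) →L[ℝ] U)
    (l : U →L[ℝ] EuclideanSpace ℝ (Fin M))
    (h : ∀ y : EuclideanSpace ℝ (Fin M), A (l (A y)) = A y) :
    (A.comp l).comp (A.comp l) = A.comp l
    ∧ (A.comp l ≠ 0 → A.comp l ≠ ContinuousLinearMap.id ℝ U →
        ‖ContinuousLinearMap.id ℝ U - A.comp l‖ = ‖A.comp l‖) :=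
  perfect_algorithm_idempotent_norm_general A l h
end

section
/- Let A: ℝ^M → U be a linear map with finite-dimensional range, let ℓ: U → ℝ^M be a bounded linear map, and set A_ℓ = A ∘ ℓ. Define Λ₂(A) = sup over nonzero y ∈ ℝ^M of ‖A(y)‖/‖y‖₂, Λ_U(A) = sup over nonzero u ∈ U of ‖u − A_ℓ(u)‖/‖u‖, and Λ_U^bias(A) = sup over nonzero w in the range of A of ‖w − A_ℓ(w)‖/‖w‖. Then for every u ∈ U and every y ∈ ℝ^M: ‖A(y) − u‖ ≤ Λ₂(A)·‖y − ℓ(u)‖₂ + Λ_U(A)·‖Π_{range(A)^⊥}(u)‖ + Λ_U^bias(A)·‖u‖, where Π_{range(A)^⊥} is the orthogonal projection onto the orthogonal complement of the range of A. (Proposition 3.2, estimate (3.5).) -/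
section OperatorNorm

variable {𝕜 E F : Type*} [NontriviallyNormedField 𝕜] [NormedAddCommGroup E] [NormedSpace 𝕜 E]
  [SeminormedAddCommGroup F] [NormedSpace 𝕜 F]

theorem opNorm_eq_sSup_norm_div_norm (f : E →L[𝕜] F) :
    ‖f‖ = sSup {r : ℝ | ∃ v : E, v ≠ 0 ∧ r = ‖f v‖ / ‖v‖} := by
  set ratios := {r : ℝ | ∃ v : E, v ≠ 0 ∧ r = ‖f v‖ / ‖v‖}
  have le_opNorm : ∀ r ∈ ratios, r ≤ ‖f‖ := by
    rintro _ ⟨v, -, rfl⟩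
    exact f.ratio_le_opNorm v
  have sSup_nonneg : 0 ≤ sSup ratios := by
    refine Real.sSup_nonneg ?_
    rintro _ ⟨v, -, rfl⟩
    positivity
  refine le_antisymm (f.opNorm_le_bound' sSup_nonneg fun v hv => ?_)
    (Real.sSup_le le_opNorm (norm_nonneg f))
  have hv : v ≠ 0 := norm_ne_zero_iff.mp hv
  exact (div_le_iff₀ (norm_pos_iff.mpr hv)).mp (le_csSup ⟨‖f‖, le_opNorm⟩ ⟨v, hv, rfl⟩)

theorem opNorm_domRestrict_eq_sSup_norm_div_norm (f : E →L[𝕜] F) (K : Submodule 𝕜 E) :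
    ‖f.domRestrict K‖ = sSup {r : ℝ | ∃ w : E, w ∈ K ∧ w ≠ 0 ∧ r = ‖f w‖ / ‖w‖} := by
  simp [opNorm_eq_sSup_norm_div_norm, and_left_comm]

end OperatorNorm

section OrthogonalSplitting

variable {𝕜 U : Type*} [RCLike 𝕜] [NormedAddCommGroup U] [InnerProductSpace 𝕜 U]

theorem norm_apply_le_opNorm_mul_add_opNorm_domRestrict_mul
    {F : Type*} [SeminormedAddCommGroup F] [NormedSpace 𝕜 F] (T : U →L[𝕜] F)
    (K : Submodule 𝕜 U) [K.HasOrthogonalProjection] (u : U) :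
    ‖T u‖ ≤ ‖T‖ * ‖Kᗮ.starProjection u‖ + ‖T.domRestrict K‖ * ‖u‖ := by
  have split : T u = T (Kᗮ.starProjection u) + T.domRestrict K (K.orthogonalProjectionOnto u) := by
    rw [ContinuousLinearMap.domRestrict_apply, ← K.starProjection_apply, ← map_add, add_comm,
      K.starProjection_add_starProjection_orthogonal]
  calc ‖T u‖
      ≤ ‖T (Kᗮ.starProjection u)‖ + ‖T.domRestrict K (K.orthogonalProjectionOnto u)‖ :=
        split ▸ norm_add_le _ _
    _ ≤ ‖T‖ * ‖Kᗮ.starProjection u‖ + ‖T.domRestrict K‖ * ‖K.orthogonalProjectionOnto u‖ :=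
        add_le_add (T.le_opNorm _) ((T.domRestrict K).le_opNorm _)
    _ ≤ ‖T‖ * ‖Kᗮ.starProjection u‖ + ‖T.domRestrict K‖ * ‖u‖ := by
        gcongr
        exact K.norm_orthogonalProjectionOnto_apply_le u

/-- The three stability constants are operator norms: `Λ₂(A) = ‖A‖`, `Λ_U(A) = ‖id - A ∘ ℓ‖`, and
`Λ_U^bias(A)` is the norm of the restriction of `id - A ∘ ℓ` to the range of `A`. -/
theorem linear_recovery_error_bound_general {E : Type*} [SeminormedAddCommGroup E]
    [NormedSpace 𝕜 E] (A : E →L[𝕜] U) (l : U →L[𝕜] E)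
    [(LinearMap.range A.toLinearMap).HasOrthogonalProjection] (u : U) (y : E) :
    ‖A y - u‖
      ≤ ‖A‖ * ‖y - l u‖
        + ‖ContinuousLinearMap.id 𝕜 U - A ∘L l‖
          * ‖(LinearMap.range A.toLinearMap)ᗮ.starProjection u‖
        + ‖(ContinuousLinearMap.id 𝕜 U - A ∘L l).domRestrict (LinearMap.range A.toLinearMap)‖
          * ‖u‖ := by
  set T := ContinuousLinearMap.id 𝕜 U - A ∘L l
  have split : A y - u = A (y - l u) - T u := by simp [T]
  calc ‖A y - u‖
      ≤ ‖A (y - l u)‖ + ‖T u‖ := split ▸ norm_sub_le _ _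
    _ ≤ _ := by
        rw [add_assoc]
        exact add_le_add (A.le_opNorm _)
          (norm_apply_le_opNorm_mul_add_opNorm_domRestrict_mul T _ u)

end OrthogonalSplitting

/-- **Proposition 3.2, estimate (3.5).**
For a linear recovery algorithm A : ℝ^M → U (finite rank) and bounded linear
observations ℓ : U → ℝ^M, with A_ℓ = A ∘ ℓ and the stability constants
Λ₂(A), Λ_U(A), Λ_U^bias(A), one has, for every u ∈ U and y ∈ ℝ^M,
‖A(y) − u‖ ≤ Λ₂(A)‖y − ℓ(u)‖₂ + Λ_U(A)‖Π_{range(A)^⊥}u‖ + Λ_U^bias(A)‖u‖. -/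
theorem linear_recovery_error_bound
    {U : Type*} [NormedAddCommGroup U] [InnerProductSpace ℝ U] [CompleteSpace U]
    {M : ℕ}
    (A : EuclideanSpace ℝ (Fin M) →ₗ[ℝ] U)
    (l : U →L[ℝ] EuclideanSpace ℝ (Fin M))
    (Pperp : U → U)
    (hPperp : ∀ u, Pperp u ∈ (LinearMap.range A)ᗮ
      ∧ u - Pperp u ∈ ((LinearMap.range A)ᗮ)ᗮ)
    (u : U) (y : EuclideanSpace ℝ (Fin M)) :
    ‖A y - u‖
      ≤ sSup {r : ℝ | ∃ v : EuclideanSpace ℝ (Fin M), v ≠ 0 ∧ r = ‖A v‖ / ‖v‖}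
          * ‖y - l u‖
        + sSup {r : ℝ | ∃ v : U, v ≠ 0 ∧ r = ‖v - A (l v)‖ / ‖v‖}
          * ‖Pperp u‖
        + sSup {r : ℝ | ∃ w : U, w ∈ LinearMap.range A ∧ w ≠ 0
              ∧ r = ‖w - A (l w)‖ / ‖w‖}
          * ‖u‖ := by
  have bound := linear_recovery_error_bound_general A.toContinuousLinearMap l u y
  rw [opNorm_domRestrict_eq_sSup_norm_div_norm, opNorm_eq_sSup_norm_div_norm,
    opNorm_eq_sSup_norm_div_norm] at bound
  rwa [← Submodule.eq_starProjection_of_mem_orthogonal (hPperp u).1 (hPperp u).2]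
end

section
/- Let Z and V be closed subspaces of U with Z ≠ {0}, and let Π_V denote the orthogonal projection onto V. Then the infimum over all pairs (z, η) with z ∈ Z, η ∈ Z^⊥ ∩ V and (z, η) ≠ (0, 0) of the quantity ‖Π_V(z) + η‖² / (‖z‖² + ‖η‖²) equals the infimum over nonzero z ∈ Z of ‖Π_V(z)‖² / ‖z‖². Moreover, for z ∈ Z and η ∈ Z^⊥ ∩ V one has Π_V(z + η) = Π_V(z) + η and ‖Π_V(z) + η‖² = ‖Π_V(z)‖² + ‖η‖². (Key identity β̃ = β_{N,M} in the proof of identity (3.14), relating the quasi-optimality constant of PBDW with ξ = 0 to the inf-sup constant.) -/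
/-!
For `η ∈ V` orthogonal to `z`, symmetry of the projection gives
`⟪Π_V z, η⟫ = ⟪z, Π_V η⟫ = ⟪z, η⟫ = 0`, so by Pythagoras the quotient at `(z, η)` is
`(‖Π_V z‖² + ‖η‖²) / (‖z‖² + ‖η‖²)`. Since `‖Π_V z‖ ≤ ‖z‖`, adding `‖η‖²` to both numerator and
denominator can only increase the quotient, so `η = 0` is optimal; when `z = 0` the quotient is `1`,
which is at least every `‖Π_V w‖² / ‖w‖²`.
-/

lemma div_le_add_div_add_of_le {K : Type*} [Field K] [LinearOrder K] [IsStrictOrderedRing K]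
    {a b c : K} (hab : a ≤ b) (hb : 0 < b) (hc : 0 ≤ c) : a / b ≤ (a + c) / (b + c) := by
  have hac_le_bc : a * c ≤ b * c := mul_le_mul_of_nonneg_right hab hc
  rw [div_le_div_iff₀ hb (add_pos_of_pos_of_nonneg hb hc)]
  linarith

section StarProjection

variable {𝕜 E : Type*} [RCLike 𝕜] [NormedAddCommGroup E] [InnerProductSpace 𝕜 E]
  {Z V : Submodule 𝕜 E} [V.HasOrthogonalProjection]

lemma starProjection_add_of_mem (z : E) {η : E} (hη : η ∈ V) :
    V.starProjection (z + η) = V.starProjection z + η := by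
  rw [map_add, Submodule.starProjection_eq_self_iff.2 hη]

lemma inner_starProjection_left_of_mem (z : E) {η : E} (hη : η ∈ V) :
    inner 𝕜 (V.starProjection z) η = inner 𝕜 z η := by
  rw [V.inner_starProjection_left_eq_right, Submodule.starProjection_eq_self_iff.2 hη]

lemma norm_starProjection_add_sq_of_inner_eq_zero {z η : E} (hη : η ∈ V)
    (hzη : inner 𝕜 z η = 0) :
    ‖V.starProjection z + η‖ ^ 2 = ‖V.starProjection z‖ ^ 2 + ‖η‖ ^ 2 := by
  simp only [sq]
  apply norm_add_sq_eq_norm_sq_add_norm_sq_of_inner_eq_zero (𝕜 := 𝕜)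
  rw [inner_starProjection_left_of_mem z hη, hzη]

lemma norm_starProjection_sq_le (z : E) : ‖V.starProjection z‖ ^ 2 ≤ ‖z‖ ^ 2 :=
  pow_le_pow_left₀ (norm_nonneg _) (V.norm_starProjection_apply_le z) 2

lemma norm_starProjection_sq_div_le_one (z : E) : ‖V.starProjection z‖ ^ 2 / ‖z‖ ^ 2 ≤ 1 :=
  div_le_one_of_le₀ (norm_starProjection_sq_le z) (sq_nonneg _)

lemma norm_starProjection_sq_div_le_of_inner_eq_zero {z η : E} (hz : z ≠ 0) (hη : η ∈ V)
    (hzη : inner 𝕜 z η = 0) :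
    ‖V.starProjection z‖ ^ 2 / ‖z‖ ^ 2
      ≤ ‖V.starProjection z + η‖ ^ 2 / (‖z‖ ^ 2 + ‖η‖ ^ 2) := by
  rw [norm_starProjection_add_sq_of_inner_eq_zero hη hzη]
  exact div_le_add_div_add_of_le (norm_starProjection_sq_le z) (by positivity) (sq_nonneg _)

lemma exists_norm_starProjection_sq_div_le (hZ : Z ≠ ⊥) {z η : E} (hz : z ∈ Z)
    (hη : η ∈ Zᗮ ⊓ V) (hne : ¬(z = 0 ∧ η = 0)) :
    ∃ w ∈ Z, w ≠ 0 ∧ ‖V.starProjection w‖ ^ 2 / ‖w‖ ^ 2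
      ≤ ‖V.starProjection z + η‖ ^ 2 / (‖z‖ ^ 2 + ‖η‖ ^ 2) := by
  rcases eq_or_ne z 0 with rfl | hz0
  · obtain ⟨w, hw, hw0⟩ := Submodule.exists_mem_ne_zero_of_ne_bot hZ
    have hη0 : η ≠ 0 := fun h => hne ⟨rfl, h⟩
    have quotient_eq_one :
        ‖V.starProjection 0 + η‖ ^ 2 / (‖(0 : E)‖ ^ 2 + ‖η‖ ^ 2) = 1 := by
      simp [hη0]
    exact ⟨w, hw, hw0, quotient_eq_one ▸ norm_starProjection_sq_div_le_one w⟩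
  · exact ⟨z, hz, hz0, norm_starProjection_sq_div_le_of_inner_eq_zero hz0 hη.2 (hη.1 z hz)⟩

end StarProjection

theorem inf_sup_identity_pbdw_general
    {𝕜 E : Type*} [RCLike 𝕜] [NormedAddCommGroup E] [InnerProductSpace 𝕜 E]
    (Z V : Submodule 𝕜 E) [V.HasOrthogonalProjection] (hZ : Z ≠ ⊥) :
    (sInf {r : ℝ | ∃ z η : E, z ∈ Z ∧ η ∈ Zᗮ ⊓ V ∧ ¬(z = 0 ∧ η = 0)
          ∧ r = ‖V.starProjection z + η‖ ^ 2 / (‖z‖ ^ 2 + ‖η‖ ^ 2)}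
        = sInf {r : ℝ | ∃ z : E, z ∈ Z ∧ z ≠ 0 ∧ r = ‖V.starProjection z‖ ^ 2 / ‖z‖ ^ 2})
    ∧ ∀ z ∈ Z, ∀ η ∈ Zᗮ ⊓ V,
        V.starProjection (z + η) = V.starProjection z + η
        ∧ ‖V.starProjection z + η‖ ^ 2 = ‖V.starProjection z‖ ^ 2 + ‖η‖ ^ 2 := by
  refine ⟨csInf_eq_csInf_of_forall_exists_le ?_ ?_, fun z hz η hη => ⟨?_, ?_⟩⟩
  · rintro _ ⟨z, η, hz, hη, hne, rfl⟩
    obtain ⟨w, hw, hw0, hle⟩ := exists_norm_starProjection_sq_div_le hZ hz hη hne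
    exact ⟨_, ⟨w, hw, hw0, rfl⟩, hle⟩
  · rintro _ ⟨z, hz, hz0, rfl⟩
    exact ⟨_, ⟨z, 0, hz, zero_mem _, fun h => hz0 h.1, rfl⟩, by simp⟩
  · exact starProjection_add_of_mem z hη.2
  · exact norm_starProjection_add_sq_of_inner_eq_zero hη.2 (hη.1 z hz)

/-- **Key identity β̃ = β_{N,M} in the proof of identity (3.14).**
Let Z, V be closed subspaces of the Hilbert space U with Z ≠ {0} and let Π_V
be the orthogonal projection onto V.  Then
inf over (z, η) ∈ Z × (Z^⊥ ∩ V), (z, η) ≠ (0,0), of ‖Π_V z + η‖²/(‖z‖² + ‖η‖²)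
equals inf over nonzero z ∈ Z of ‖Π_V z‖²/‖z‖².  Moreover, for such z and η,
Π_V(z + η) = Π_V z + η and ‖Π_V z + η‖² = ‖Π_V z‖² + ‖η‖². -/
theorem inf_sup_identity_pbdw
    {U : Type*} [NormedAddCommGroup U] [InnerProductSpace ℝ U] [CompleteSpace U]
    (Z V : Submodule ℝ U)
    (hZclosed : IsClosed (Z : Set U)) (hVclosed : IsClosed (V : Set U))
    (hZ : Z ≠ ⊥)
    (PV : U → U) (hPV : ∀ u, PV u ∈ V ∧ u - PV u ∈ Vᗮ) :
    (sInf {r : ℝ | ∃ z η : U, z ∈ Z ∧ η ∈ Zᗮ ⊓ V ∧ ¬(z = 0 ∧ η = 0)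
          ∧ r = ‖PV z + η‖ ^ 2 / (‖z‖ ^ 2 + ‖η‖ ^ 2)}
        = sInf {r : ℝ | ∃ z : U, z ∈ Z ∧ z ≠ 0 ∧ r = ‖PV z‖ ^ 2 / ‖z‖ ^ 2})
    ∧ ∀ z ∈ Z, ∀ η ∈ Zᗮ ⊓ V,
        PV (z + η) = PV z + η ∧ ‖PV z + η‖ ^ 2 = ‖PV z‖ ^ 2 + ‖η‖ ^ 2 := by
  have : V.HasOrthogonalProjection := ⟨fun u => ⟨PV u, hPV u⟩⟩
  obtain rfl : V.starProjection = PV :=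
    funext fun u => Submodule.eq_starProjection_of_mem_orthogonal (hPV u).1 (hPV u).2
  exact inf_sup_identity_pbdw_general Z V hZ
end

section
/- Let L ∈ ℝ^{M×N} with M ≥ N have full column rank (so LᵀL is invertible), and let D ∈ ℝ^{N×M} satisfy D·L = 0. Then: (i) ((LᵀL)⁻¹Lᵀ + D)·((LᵀL)⁻¹Lᵀ + D)ᵀ = (LᵀL)⁻¹ + D·Dᵀ; and (ii) the largest singular value of (LᵀL)⁻¹Lᵀ + D is at least the largest singular value of (LᵀL)⁻¹Lᵀ, i.e., s_max((LᵀL)⁻¹Lᵀ + D) ≥ s_max((LᵀL)⁻¹Lᵀ). (Proposition 3.4, first inequality: among all linear unbiased recovery algorithms with background space Z_N, the PBDW algorithm with ξ = ∞ minimizes the noise-stability constant Λ₂.) -/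
open Matrix

/-- The largest singular value of a real matrix, i.e. its operator norm as a
map between Euclidean spaces: s_max(B) = sup_{x ≠ 0} ‖Bx‖₂ / ‖x‖₂. -/
noncomputable def sMax {m n : ℕ} (B : Matrix (Fin m) (Fin n) ℝ) : ℝ :=
  sSup {r : ℝ | ∃ x : Fin n → ℝ, x ≠ 0
    ∧ r = Real.sqrt (B.mulVec x ⬝ᵥ B.mulVec x) / Real.sqrt (x ⬝ᵥ x)}

/-!
Write `P = (LᴴL)⁻¹Lᴴ`. The identity for `(P + D)(P + D)ᴴ` holds because `DL = 0` kills both cross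
terms. For the norm bound, `P + D` is a left inverse of `L`, and every left inverse `B` of `L`
satisfies `P = B(LP)`. Since `LP` is an orthogonal projection, it has norm at most one, so
`‖P‖ ≤ ‖B‖`.
-/

section LeftPinv

variable {m n R : Type*} [Fintype m] [Fintype n] [DecidableEq n] [CommRing R] [StarRing R]

/-- The least-squares left inverse `(LᴴL)⁻¹Lᴴ` of a matrix `L`, i.e. its Moore–Penrose inverse when
`LᴴL` is invertible. Otherwise the total matrix inverse `⁻¹` makes it `0`. -/
noncomputable def leftPinv (L : Matrix m n R) : Matrix n m R :=
  (Lᴴ * L)⁻¹ * Lᴴ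

variable {L : Matrix m n R}

theorem leftPinv_mul_self (hL : IsUnit (Lᴴ * L)) : leftPinv L * L = 1 := by
  rw [leftPinv, Matrix.mul_assoc, nonsing_inv_mul _ ((isUnit_iff_isUnit_det _).mp hL)]

theorem conjTranspose_leftPinv (L : Matrix m n R) : (leftPinv L)ᴴ = L * (Lᴴ * L)⁻¹ := by
  rw [leftPinv, conjTranspose_mul, conjTranspose_conjTranspose,
    (isHermitian_conjTranspose_mul_self L).inv.eq]

theorem leftPinv_mul_conjTranspose_self (hL : IsUnit (Lᴴ * L)) :
    leftPinv L * (leftPinv L)ᴴ = (Lᴴ * L)⁻¹ := by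
  rw [conjTranspose_leftPinv, ← Matrix.mul_assoc, leftPinv_mul_self hL, Matrix.one_mul]

theorem mul_conjTranspose_leftPinv_eq_zero {k : Type*} {D : Matrix k m R} (hD : D * L = 0) :
    D * (leftPinv L)ᴴ = 0 := by
  rw [conjTranspose_leftPinv, ← Matrix.mul_assoc, hD, Matrix.zero_mul]

theorem leftPinv_add_mul_conjTranspose_self (hL : IsUnit (Lᴴ * L)) {D : Matrix n m R}
    (hD : D * L = 0) :
    (leftPinv L + D) * (leftPinv L + D)ᴴ = (Lᴴ * L)⁻¹ + D * Dᴴ := by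
  have cross : D * (leftPinv L)ᴴ = 0 := mul_conjTranspose_leftPinv_eq_zero hD
  have cross' : leftPinv L * Dᴴ = 0 := by simpa using congr(($cross)ᴴ)
  rw [conjTranspose_add, Matrix.add_mul, Matrix.mul_add, Matrix.mul_add,
    leftPinv_mul_conjTranspose_self hL, cross, cross', add_zero, zero_add]

theorem isStarProjection_mul_leftPinv (hL : IsUnit (Lᴴ * L)) :
    IsStarProjection (L * leftPinv L) where
  isIdempotentElem := by
    rw [IsIdempotentElem, Matrix.mul_assoc, ← Matrix.mul_assoc (leftPinv L),
      leftPinv_mul_self hL, Matrix.one_mul]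
  isSelfAdjoint := by
    rw [IsSelfAdjoint, star_eq_conjTranspose, conjTranspose_mul, conjTranspose_leftPinv,
      leftPinv, Matrix.mul_assoc]

end LeftPinv

section OperatorNorm

open scoped Matrix.Norms.L2Operator

variable {m n 𝕜 : Type*} [Fintype m] [Fintype n] [DecidableEq n] [RCLike 𝕜]

theorem isUnit_conjTranspose_mul_self {L : Matrix m n 𝕜} (hL : Function.Injective L.mulVec) :
    IsUnit (Lᴴ * L) :=
  open scoped ComplexOrder in (PosDef.conjTranspose_mul_self L hL).isUnit

theorem l2_opNorm_leftPinv_le_of_mul_eq_one [DecidableEq m] {L : Matrix m n 𝕜} {B : Matrix n m 𝕜}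
    (hB : B * L = 1) : ‖leftPinv L‖ ≤ ‖B‖ := by
  have hL : IsUnit (Lᴴ * L) :=
    isUnit_conjTranspose_mul_self <| Function.LeftInverse.injective (g := B.mulVec) fun x ↦ by
      rw [mulVec_mulVec, hB, one_mulVec]
  calc ‖leftPinv L‖ = ‖B * (L * leftPinv L)‖ := by
        rw [← Matrix.mul_assoc, hB, Matrix.one_mul]
    _ ≤ ‖B‖ * ‖L * leftPinv L‖ := l2_opNorm_mul _ _
    _ ≤ ‖B‖ := mul_le_of_le_one_right (norm_nonneg B)
        (IsStarProjection.norm_le _ (isStarProjection_mul_leftPinv hL))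

theorem sqrt_dotProduct_self_eq_norm {ι : Type*} [Fintype ι] (x : ι → ℝ) :
    √(x ⬝ᵥ x) = ‖WithLp.toLp 2 x‖ := by
  simp [EuclideanSpace.norm_eq, dotProduct, sq]

theorem sMax_eq_l2_opNorm {k l : ℕ} (B : Matrix (Fin k) (Fin l) ℝ) : sMax B = ‖B‖ := by
  have quotient_le : ∀ x : Fin l → ℝ, √(B *ᵥ x ⬝ᵥ B *ᵥ x) / √(x ⬝ᵥ x) ≤ ‖B‖ := fun x ↦ by
    rw [sqrt_dotProduct_self_eq_norm, sqrt_dotProduct_self_eq_norm]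
    exact div_le_of_le_mul₀ (norm_nonneg _) (norm_nonneg _) (l2_opNorm_mulVec B (WithLp.toLp 2 x))
  apply le_antisymm
  · refine Real.sSup_le ?_ (norm_nonneg B)
    rintro _ ⟨x, -, rfl⟩
    exact quotient_le x
  · have sMax_nonneg : 0 ≤ sMax B := Real.sSup_nonneg (by rintro _ ⟨x, -, rfl⟩; positivity)
    refine ContinuousLinearMap.opNorm_le_bound' _ sMax_nonneg fun x hx ↦ ?_
    rw [← div_le_iff₀ (by positivity)]
    refine le_csSup ⟨‖B‖, ?_⟩ ⟨x.ofLp, by simpa using hx, ?_⟩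
    · rintro _ ⟨y, -, rfl⟩
      exact quotient_le y
    · rw [sqrt_dotProduct_self_eq_norm, sqrt_dotProduct_self_eq_norm]
      rfl

end OperatorNorm

/-- **Proposition 3.4, first inequality.**
Let L ∈ ℝ^{M×N} (M ≥ N) have full column rank and let D ∈ ℝ^{N×M} satisfy
D·L = 0.  Then ((LᵀL)⁻¹Lᵀ + D)((LᵀL)⁻¹Lᵀ + D)ᵀ = (LᵀL)⁻¹ + DDᵀ and
s_max((LᵀL)⁻¹Lᵀ + D) ≥ s_max((LᵀL)⁻¹Lᵀ). -/
theorem pbdw_xi_infty_minimizes_Lambda2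
    {M N : ℕ} (hMN : N ≤ M)
    (L : Matrix (Fin M) (Fin N) ℝ)
    (hfullrank : ∀ z : Fin N → ℝ, L.mulVec z = 0 → z = 0)
    (D : Matrix (Fin N) (Fin M) ℝ) (hD : D * L = 0) :
    ((Lᵀ * L)⁻¹ * Lᵀ + D) * ((Lᵀ * L)⁻¹ * Lᵀ + D)ᵀ
        = (Lᵀ * L)⁻¹ + D * Dᵀ
    ∧ sMax ((Lᵀ * L)⁻¹ * Lᵀ) ≤ sMax ((Lᵀ * L)⁻¹ * Lᵀ + D) := by
  have hL : IsUnit (Lᴴ * L) :=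
    isUnit_conjTranspose_mul_self ((injective_iff_map_eq_zero L.mulVecLin).mpr hfullrank)
  have left_inverse : (leftPinv L + D) * L = 1 := by
    rw [Matrix.add_mul, leftPinv_mul_self hL, hD, add_zero]
  simp only [← conjTranspose_eq_transpose_of_trivial, sMax_eq_l2_opNorm]
  exact ⟨leftPinv_add_mul_conjTranspose_self hL hD,
    l2_opNorm_leftPinv_le_of_mul_eq_one left_inverse⟩
end

section
/- Let K ∈ ℝ^{M×M} be symmetric positive definite, let L ∈ ℝ^{M×N} with M ≥ N have full column rank (so LᵀK⁻¹L is invertible), and let E ∈ ℝ^{N×M} satisfy E·L = 0. Set B = K⁻¹·L·(LᵀK⁻¹L)⁻¹ + Eᵀ ∈ ℝ^{M×N}. Then: (i) Bᵀ·K·B = (LᵀK⁻¹L)⁻¹ + E·K·Eᵀ; and (ii) for every z ∈ ℝ^N, zᵀ·Bᵀ·K·B·z ≥ zᵀ·(LᵀK⁻¹L)⁻¹·z; hence sup over nonzero z of (zᵀBᵀKBz)/‖z‖₂² is at least sup over nonzero z of (zᵀ(LᵀK⁻¹L)⁻¹z)/‖z‖₂². (Proposition 3.4, second inequality: among all linear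 unbiased recovery algorithms with background space Z_N, the background component of PBDW with ξ = 0 minimizes the quasi-optimality constant Λ_U.) -/
open Matrix

/-!
Put `W = K⁻¹L(LᴴK⁻¹L)⁻¹`. Then `KW = L(LᴴK⁻¹L)⁻¹`, so every `E` with `EL = 0` satisfies `EKW = 0`:
the columns of `Eᴴ` are orthogonal to those of `W` for the inner product defined by `K`. Pythagoras'
theorem then gives `(W + Eᴴ)ᴴK(W + Eᴴ) = WᴴKW + EKEᴴ`, where `WᴴKW = (LᴴK⁻¹L)⁻¹` because `WᴴL = 1`
and where `EKEᴴ` is positive semidefinite. The suprema of the Rayleigh quotients are monotone for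
the Loewner order because the Rayleigh quotients of a bounded operator are bounded.
-/

section Pythagoras

variable {m n R : Type*} [Fintype m] [NonUnitalSemiring R] [StarRing R]

lemma conjTranspose_add_mul_mul_add_of_orthogonal {K : Matrix m m R} (hK : K.IsHermitian)
    {V W : Matrix m n R} (hVW : Vᴴ * K * W = 0) :
    (W + V)ᴴ * K * (W + V) = Wᴴ * K * W + Vᴴ * K * V := by
  have hWV : Wᴴ * K * V = 0 := by
    simpa [conjTranspose_mul, hK.eq, Matrix.mul_assoc] using congrArg conjTranspose hVW
  simp only [conjTranspose_add, Matrix.add_mul, Matrix.mul_add, hVW, hWV, add_zero, zero_add]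

end Pythagoras

section Background

variable {m n R : Type*} [Fintype m] [DecidableEq m] [Fintype n] [DecidableEq n]
  [CommRing R] [StarRing R]

/-- The background component `K⁻¹L(LᴴK⁻¹L)⁻¹` of the PBDW algorithm with `ξ = 0`. It is stored like
the matrix `B` of the theorem, so that its conjugate transpose is the map from observations to
background coefficients. -/
noncomputable def pbdwBackground (K : Matrix m m R) (L : Matrix m n R) : Matrix m n R :=
  K⁻¹ * L * (Lᴴ * K⁻¹ * L)⁻¹

variable {K : Matrix m m R} {L : Matrix m n R}

lemma mul_pbdwBackground (hK : IsUnit K) :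
    K * pbdwBackground K L = L * (Lᴴ * K⁻¹ * L)⁻¹ := by
  rw [pbdwBackground, Matrix.mul_assoc K⁻¹,
    mul_nonsing_inv_cancel_left _ _ ((isUnit_iff_isUnit_det K).mp hK)]

-- Unbiasedness: `Wᴴ` recovers the coefficients of a background element from its observations.
lemma conjTranspose_pbdwBackground_mul (hK : K.IsHermitian) (hG : IsUnit (Lᴴ * K⁻¹ * L)) :
    (pbdwBackground K L)ᴴ * L = 1 := by
  have hG_herm : (Lᴴ * K⁻¹ * L).IsHermitian := isHermitian_conjTranspose_mul_mul L hK.inv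
  rw [pbdwBackground, conjTranspose_mul, hG_herm.inv.eq, conjTranspose_mul, hK.inv.eq,
    Matrix.mul_assoc, nonsing_inv_mul _ ((isUnit_iff_isUnit_det _).mp hG)]

lemma conjTranspose_pbdwBackground_mul_mul_self (hK_herm : K.IsHermitian) (hK : IsUnit K)
    (hG : IsUnit (Lᴴ * K⁻¹ * L)) :
    (pbdwBackground K L)ᴴ * K * pbdwBackground K L = (Lᴴ * K⁻¹ * L)⁻¹ := by
  rw [Matrix.mul_assoc, mul_pbdwBackground hK, ← Matrix.mul_assoc,
    conjTranspose_pbdwBackground_mul hK_herm hG, Matrix.one_mul]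

lemma mul_mul_pbdwBackground_eq_zero {l : Type*} (hK : IsUnit K) {E : Matrix l m R}
    (hE : E * L = 0) : E * K * pbdwBackground K L = 0 := by
  rw [Matrix.mul_assoc, mul_pbdwBackground hK, ← Matrix.mul_assoc, hE, Matrix.zero_mul]

theorem conjTranspose_mul_mul_pbdwBackground_add (hK_herm : K.IsHermitian) (hK : IsUnit K)
    (hG : IsUnit (Lᴴ * K⁻¹ * L)) {E : Matrix n m R} (hE : E * L = 0) :
    (pbdwBackground K L + Eᴴ)ᴴ * K * (pbdwBackground K L + Eᴴ) =
      (Lᴴ * K⁻¹ * L)⁻¹ + E * K * Eᴴ := by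
  have h_orthogonal : Eᴴᴴ * K * pbdwBackground K L = 0 := by
    rw [conjTranspose_conjTranspose, mul_mul_pbdwBackground_eq_zero hK hE]
  rw [conjTranspose_add_mul_mul_add_of_orthogonal hK_herm h_orthogonal,
    conjTranspose_pbdwBackground_mul_mul_self hK_herm hK hG, conjTranspose_conjTranspose]

end Background

section Rayleigh

variable {𝕜 H : Type*} [RCLike 𝕜] [NormedAddCommGroup H] [InnerProductSpace 𝕜 H]

lemma rayleighQuotient_mono {S T : H →L[𝕜] H} (hST : S ≤ T) (x : H) :
    S.rayleighQuotient x ≤ T.rayleighQuotient x := by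
  have h_nonneg : 0 ≤ (T - S).rayleighQuotient x :=
    div_nonneg (hST.re_inner_nonneg_left x) (sq_nonneg _)
  calc S.rayleighQuotient x
      ≤ S.rayleighQuotient x + (T - S).rayleighQuotient x := le_add_of_nonneg_right h_nonneg
    _ = T.rayleighQuotient x := by
        rw [← ContinuousLinearMap.rayleighQuotient_add, add_sub_cancel]

lemma iSup_rayleighQuotient_mono {S T : H →L[𝕜] H} (hST : S ≤ T) :
    ⨆ x : {x : H // x ≠ 0}, S.rayleighQuotient x ≤
      ⨆ x : {x : H // x ≠ 0}, T.rayleighQuotient x := by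
  have h_bdd : BddAbove (Set.range fun x : {x : H // x ≠ 0} ↦ T.rayleighQuotient x) :=
    ⟨‖T‖, Set.forall_mem_range.mpr fun x ↦ (abs_le.mp (T.rayleighQuotient_le_norm x)).2⟩
  exact ciSup_mono h_bdd fun x ↦ rayleighQuotient_mono hST x

end Rayleigh

section LoewnerOrder

open scoped ComplexOrder MatrixOrder

variable {m n 𝕜 : Type*} [Fintype m] [DecidableEq m] [Fintype n] [RCLike 𝕜]

lemma star_dotProduct_mulVec_mono {A B : Matrix n n 𝕜} (hAB : A ≤ B) (z : n → 𝕜) :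
    star z ⬝ᵥ A *ᵥ z ≤ star z ⬝ᵥ B *ᵥ z := by
  simpa [sub_mulVec, dotProduct_sub] using (le_iff.mp hAB).dotProduct_mulVec_nonneg z

variable [DecidableEq n]

lemma toEuclideanCLM_le_toEuclideanCLM {A B : Matrix n n 𝕜} (hAB : A ≤ B) :
    toEuclideanCLM (𝕜 := 𝕜) A ≤ toEuclideanCLM (𝕜 := 𝕜) B := by
  rw [ContinuousLinearMap.le_def, ← map_sub, ← ContinuousLinearMap.isPositive_toLinearMap_iff,
    coe_toEuclideanCLM_eq_toEuclideanLin, isPositive_toEuclideanLin_iff]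
  exact hAB

lemma sSup_dotProduct_mulVec_div_eq_iSup_rayleighQuotient (A : Matrix n n ℝ) :
    sSup {r : ℝ | ∃ z : n → ℝ, z ≠ 0 ∧ r = (z ⬝ᵥ A *ᵥ z) / (z ⬝ᵥ z)} =
      ⨆ x : {x : EuclideanSpace ℝ n // x ≠ 0},
        (toEuclideanCLM (𝕜 := ℝ) A).rayleighQuotient x := by
  have h_quotient (x : EuclideanSpace ℝ n) :
      (toEuclideanCLM (𝕜 := ℝ) A).rayleighQuotient x =
        (x.ofLp ⬝ᵥ A *ᵥ x.ofLp) / (x.ofLp ⬝ᵥ x.ofLp) := by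
    rw [ContinuousLinearMap.rayleighQuotient, ContinuousLinearMap.reApplyInnerSelf_apply,
      RCLike.re_to_real, real_inner_comm, inner_toEuclideanCLM, ← real_inner_self_eq_norm_sq,
      EuclideanSpace.inner_eq_star_dotProduct, star_trivial]
  rw [iSup]
  congr 1
  ext r
  constructor
  · rintro ⟨z, hz, rfl⟩
    exact ⟨⟨WithLp.toLp 2 z, by simpa using hz⟩, h_quotient _⟩
  · rintro ⟨⟨x, hx⟩, rfl⟩
    exact ⟨x.ofLp, by simpa using hx, h_quotient x⟩

theorem pbdw_xi_zero_minimizes_LambdaU_general {K : Matrix m m 𝕜} (hK : K.PosDef)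
    {L : Matrix m n 𝕜} (hL : Function.Injective L.mulVec) {E : Matrix n m 𝕜} (hE : E * L = 0) :
    let B : Matrix m n 𝕜 := pbdwBackground K L + Eᴴ
    Bᴴ * K * B = (Lᴴ * K⁻¹ * L)⁻¹ + E * K * Eᴴ
    ∧ (Lᴴ * K⁻¹ * L)⁻¹ ≤ Bᴴ * K * B
    ∧ ⨆ x : {x : EuclideanSpace 𝕜 n // x ≠ 0},
          (toEuclideanCLM (𝕜 := 𝕜) (Lᴴ * K⁻¹ * L)⁻¹).rayleighQuotient x
        ≤ ⨆ x : {x : EuclideanSpace 𝕜 n // x ≠ 0},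
          (toEuclideanCLM (𝕜 := 𝕜) (Bᴴ * K * B)).rayleighQuotient x := by
  intro B
  have hG : (Lᴴ * K⁻¹ * L).PosDef := hK.inv.conjTranspose_mul_mul_same hL
  have h_eq : Bᴴ * K * B = (Lᴴ * K⁻¹ * L)⁻¹ + E * K * Eᴴ :=
    conjTranspose_mul_mul_pbdwBackground_add hK.isHermitian hK.isUnit hG.isUnit hE
  have h_le : (Lᴴ * K⁻¹ * L)⁻¹ ≤ Bᴴ * K * B := by
    rw [h_eq, le_iff, add_sub_cancel_left]
    exact hK.posSemidef.mul_mul_conjTranspose_same E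
  exact ⟨h_eq, h_le, iSup_rayleighQuotient_mono (toEuclideanCLM_le_toEuclideanCLM h_le)⟩

end LoewnerOrder

/-- **Proposition 3.4, second inequality.**
Let K be symmetric positive definite, L ∈ ℝ^{M×N} (M ≥ N) of full column rank,
E ∈ ℝ^{N×M} with E·L = 0, and B = K⁻¹L(LᵀK⁻¹L)⁻¹ + Eᵀ.  Then
BᵀKB = (LᵀK⁻¹L)⁻¹ + EKEᵀ, hence zᵀBᵀKBz ≥ zᵀ(LᵀK⁻¹L)⁻¹z for all z, and the
corresponding Rayleigh suprema are ordered accordingly. -/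
theorem pbdw_xi_zero_minimizes_LambdaU
    {M N : ℕ} (hMN : N ≤ M)
    (K : Matrix (Fin M) (Fin M) ℝ) (hK : K.PosDef)
    (L : Matrix (Fin M) (Fin N) ℝ)
    (hfullrank : ∀ z : Fin N → ℝ, L.mulVec z = 0 → z = 0)
    (E : Matrix (Fin N) (Fin M) ℝ) (hE : E * L = 0) :
    let B : Matrix (Fin M) (Fin N) ℝ := K⁻¹ * L * (Lᵀ * K⁻¹ * L)⁻¹ + Eᵀ
    (Bᵀ * K * B = (Lᵀ * K⁻¹ * L)⁻¹ + E * K * Eᵀ)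
    ∧ (∀ z : Fin N → ℝ,
        z ⬝ᵥ ((Lᵀ * K⁻¹ * L)⁻¹).mulVec z ≤ z ⬝ᵥ (Bᵀ * K * B).mulVec z)
    ∧ sSup {r : ℝ | ∃ z : Fin N → ℝ, z ≠ 0
          ∧ r = (z ⬝ᵥ ((Lᵀ * K⁻¹ * L)⁻¹).mulVec z) / (z ⬝ᵥ z)}
        ≤ sSup {r : ℝ | ∃ z : Fin N → ℝ, z ≠ 0
          ∧ r = (z ⬝ᵥ (Bᵀ * K * B).mulVec z) / (z ⬝ᵥ z)} := by
  intro B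
  have hL : Function.Injective L.mulVec := (injective_iff_map_eq_zero L.mulVecLin).mpr hfullrank
  obtain ⟨h_eq, h_le, h_iSup_le⟩ := pbdw_xi_zero_minimizes_LambdaU_general hK hL hE
  simp only [sSup_dotProduct_mulVec_div_eq_iSup_rayleighQuotient]
  -- Over `ℝ`, `ᴴ` unfolds to `ᵀ` and `star z` to `z`.
  exact ⟨h_eq, star_dotProduct_mulVec_mono h_le, h_iSup_le⟩
end

section
/- Let Φ ⊆ ℝ^N be convex, let W ∈ ℝ^{M×M} be symmetric positive definite, let L ∈ ℝ^{M×N}, and set Q = LᵀWL. Suppose C > 0 is such that ‖z₁ − z₂‖₂² ≤ C · (z₁ − z₂)ᵀQ(z₁ − z₂) for all z₁, z₂ ∈ Φ. Given y₁, y₂ ∈ ℝ^M, for i = 1, 2 let ẑ_i ∈ Φ be a minimizer over Φ of z ↦ (Lz − y_i)ᵀW(Lz − y_i). Then ‖ẑ₁ − ẑ₂‖₂ ≤ ‖LᵀW‖₂ · C · ‖y₁ − y₂‖₂. (Proposition 3.8: stability of the nonlinear PBDW background with respect to perturbations of the data, with C = Λ_ξ^nl(Φ).) -/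
open Matrix

/-!
Minimality of `ẑᵢ` over the convex set `Φ` gives the variational inequality
`0 ≤ ⟪L (z - ẑᵢ), W (L ẑᵢ - yᵢ)⟫` for `z ∈ Φ`. Testing each minimizer against the other one and
adding the two inequalities yields, for `d = ẑ₁ - ẑ₂`,
`⟪d, Q d⟫ ≤ ⟪L d, W (y₁ - y₂)⟫ = ⟪d, Lᵀ W (y₁ - y₂)⟫`. The coercivity `‖d‖² ≤ C ⟪d, Q d⟫` and
Cauchy–Schwarz bound `‖d‖²` by `C ‖Lᵀ W‖ ‖d‖ ‖y₁ - y₂‖`, and one factor `‖d‖` cancels.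
-/

open scoped RealInnerProductSpace
open ContinuousLinearMap (adjoint)

section VariationalInequality

variable {F : Type*} [AddCommGroup F] [Module ℝ F] {B : LinearMap.BilinForm ℝ F} {S : Set F}

theorem nonneg_of_forall_nonneg_add_mul {p q : ℝ} (h : ∀ t ∈ Set.Ioc (0 : ℝ) 1, 0 ≤ p + t * q) :
    0 ≤ p := by
  have hlim : Filter.Tendsto (fun t : ℝ ↦ p + t * q) (nhdsWithin 0 (Set.Ioi 0)) (nhds p) :=
    tendsto_nhdsWithin_of_tendsto_nhds <| Continuous.tendsto' (by fun_prop) 0 p (by ring)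
  exact ge_of_tendsto hlim <| Filter.eventually_of_mem (Ioc_mem_nhdsGT one_pos) h

theorem bilinForm_add_smul_self (hB : B.IsSymm) (u v : F) (t : ℝ) :
    B (u + t • v) (u + t • v) = B u u + t * (2 * B v u + t * B v v) := by
  have hsymm : B u v = B v u := hB.eq u v
  simp only [map_add, map_smul, LinearMap.add_apply, LinearMap.smul_apply, smul_eq_mul, hsymm]
  ring

theorem bilinForm_sub_nonneg_of_isMinOn (hB : B.IsSymm) {u v y : F} (hS : StarConvex ℝ u S)
    (hv : v ∈ S) (hu : IsMinOn (fun w ↦ B (w - y) (w - y)) S u) :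
    0 ≤ B (v - u) (u - y) := by
  suffices h : 0 ≤ 2 * B (v - u) (u - y) by linarith
  refine nonneg_of_forall_nonneg_add_mul (q := B (v - u) (v - u)) fun t ht ↦ ?_
  have hmin : B (u - y) (u - y) ≤ B (u + t • (v - u) - y) (u + t • (v - u) - y) :=
    hu (hS.add_smul_sub_mem hv ht.1.le ht.2)
  rw [add_sub_right_comm, bilinForm_add_smul_self hB] at hmin
  exact nonneg_of_mul_nonneg_right (by linarith) ht.1

theorem bilinForm_sub_le_of_isMinOn (hB : B.IsSymm) (hS : Convex ℝ S) {u₁ u₂ y₁ y₂ : F}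
    (hu₁ : u₁ ∈ S) (hu₂ : u₂ ∈ S)
    (hmin₁ : IsMinOn (fun w ↦ B (w - y₁) (w - y₁)) S u₁)
    (hmin₂ : IsMinOn (fun w ↦ B (w - y₂) (w - y₂)) S u₂) :
    B (u₁ - u₂) (u₁ - u₂) ≤ B (u₁ - u₂) (y₁ - y₂) := by
  have h₁ : 0 ≤ B (u₂ - u₁) (u₁ - y₁) :=
    bilinForm_sub_nonneg_of_isMinOn hB (hS.starConvex hu₁) hu₂ hmin₁
  have h₂ : 0 ≤ B (u₁ - u₂) (u₂ - y₂) :=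
    bilinForm_sub_nonneg_of_isMinOn hB (hS.starConvex hu₂) hu₁ hmin₂
  simp only [map_sub, LinearMap.sub_apply] at h₁ h₂ ⊢
  linarith

end VariationalInequality

section SpectralNorm

variable {l m n : Type*} [Fintype l] [Fintype m] [Fintype n]

theorem euclideanNorm_sq_eq_dotProduct (x : EuclideanSpace ℝ n) :
    ‖x‖ ^ 2 = x.ofLp ⬝ᵥ x.ofLp := by
  simp only [EuclideanSpace.real_norm_sq_eq, dotProduct, ← sq]

theorem euclideanNorm_eq_sqrt_dotProduct (x : EuclideanSpace ℝ n) :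
    ‖x‖ = √(x.ofLp ⬝ᵥ x.ofLp) := by
  rw [← euclideanNorm_sq_eq_dotProduct, Real.sqrt_sq (norm_nonneg x)]

variable [DecidableEq n]

/-- The continuous linear map between Euclidean spaces given by a real matrix; unlike
`Matrix.toEuclideanCLM`, the matrix may be rectangular. -/
noncomputable def euclideanCLM (A : Matrix m n ℝ) :
    EuclideanSpace ℝ n →L[ℝ] EuclideanSpace ℝ m :=
  (toEuclideanLin A).toContinuousLinearMap

theorem ofLp_euclideanCLM (A : Matrix m n ℝ) (x : EuclideanSpace ℝ n) :
    (euclideanCLM A x).ofLp = A *ᵥ x.ofLp := rfl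

theorem inner_euclideanCLM (A : Matrix m n ℝ) (x : EuclideanSpace ℝ m) (y : EuclideanSpace ℝ n) :
    ⟪x, euclideanCLM A y⟫ = x.ofLp ⬝ᵥ A *ᵥ y.ofLp := by
  rw [EuclideanSpace.inner_eq_star_dotProduct, star_trivial, dotProduct_comm, ofLp_euclideanCLM]

theorem euclideanCLM_mul [DecidableEq m] (A : Matrix l m ℝ) (B : Matrix m n ℝ) :
    euclideanCLM (A * B) = euclideanCLM A ∘L euclideanCLM B := by
  ext x : 1
  exact congrArg (WithLp.toLp 2) (mulVec_mulVec x.ofLp A B).symm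

theorem adjoint_euclideanCLM [DecidableEq m] (A : Matrix m n ℝ) :
    adjoint (euclideanCLM A) = euclideanCLM Aᵀ := by
  rw [← conjTranspose_eq_transpose_of_trivial, euclideanCLM, euclideanCLM,
    toEuclideanLin_conjTranspose_eq_adjoint, LinearMap.adjoint_toContinuousLinearMap]

theorem isSelfAdjoint_euclideanCLM {A : Matrix n n ℝ} (hA : A.IsHermitian) :
    IsSelfAdjoint (euclideanCLM A) := by
  rw [ContinuousLinearMap.isSelfAdjoint_iff', adjoint_euclideanCLM,
    ← conjTranspose_eq_transpose_of_trivial, hA.eq]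

theorem norm_euclideanCLM_div_norm (A : Matrix m n ℝ) (x : EuclideanSpace ℝ n) :
    ‖euclideanCLM A x‖ / ‖x‖ = √(A *ᵥ x.ofLp ⬝ᵥ A *ᵥ x.ofLp) / √(x.ofLp ⬝ᵥ x.ofLp) := by
  rw [euclideanNorm_eq_sqrt_dotProduct, euclideanNorm_eq_sqrt_dotProduct, ofLp_euclideanCLM]

theorem sMax_eq_norm_euclideanCLM {m n : ℕ} (A : Matrix (Fin m) (Fin n) ℝ) :
    sMax A = ‖euclideanCLM A‖ := by
  have hle : ∀ r ∈ {r : ℝ | ∃ x : Fin n → ℝ, x ≠ 0 ∧ r = √(A *ᵥ x ⬝ᵥ A *ᵥ x) / √(x ⬝ᵥ x)},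
      r ≤ ‖euclideanCLM A‖ := by
    rintro _ ⟨x, -, rfl⟩
    rw [← norm_euclideanCLM_div_norm A (WithLp.toLp 2 x)]
    exact (euclideanCLM A).ratio_le_opNorm _
  have hnonneg : 0 ≤ sMax A := Real.sSup_nonneg <| by rintro _ ⟨x, -, rfl⟩; positivity
  apply le_antisymm (Real.sSup_le hle (norm_nonneg _))
  refine ContinuousLinearMap.opNorm_le_bound' _ hnonneg fun x hx ↦ ?_
  rw [← div_le_iff₀ (lt_of_le_of_ne' (norm_nonneg x) hx)]
  exact le_csSup ⟨_, hle⟩ ⟨x.ofLp, by simpa using hx, norm_euclideanCLM_div_norm A x⟩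

end SpectralNorm

section HilbertSpace

theorem le_of_sq_le_mul_of_nonneg {a b : ℝ} (hb : 0 ≤ b) (h : a ^ 2 ≤ a * b) : a ≤ b := by
  by_contra! hlt
  have : a * b < a ^ 2 := by rw [sq]; gcongr; exact hb.trans_lt hlt
  linarith

variable {E F : Type*} [NormedAddCommGroup E] [InnerProductSpace ℝ E] [CompleteSpace E]
  [NormedAddCommGroup F] [InnerProductSpace ℝ F] [CompleteSpace F]

theorem inner_adjoint_comp_sub_le_of_isMinOn {Φ : Set E} (hΦ : Convex ℝ Φ) {W : F →L[ℝ] F}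
    (hW : IsSelfAdjoint W) (L : E →L[ℝ] F) {y₁ y₂ : F} {z₁ z₂ : E} (hz₁ : z₁ ∈ Φ) (hz₂ : z₂ ∈ Φ)
    (hmin₁ : IsMinOn (fun z ↦ ⟪L z - y₁, W (L z - y₁)⟫) Φ z₁)
    (hmin₂ : IsMinOn (fun z ↦ ⟪L z - y₂, W (L z - y₂)⟫) Φ z₂) :
    ⟪z₁ - z₂, (adjoint L ∘L W ∘L L) (z₁ - z₂)⟫ ≤ ⟪z₁ - z₂, (adjoint L ∘L W) (y₁ - y₂)⟫ := by
  let B : LinearMap.BilinForm ℝ F := (innerₗ F).compl₂ (W : F →ₗ[ℝ] F)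
  have hB : B.IsSymm := ⟨fun u v ↦ (hW.isSymmetric u v).symm.trans (real_inner_comm _ _)⟩
  have h := bilinForm_sub_le_of_isMinOn hB (hΦ.linear_image (L : E →ₗ[ℝ] F))
    (Set.mem_image_of_mem L hz₁) (Set.mem_image_of_mem L hz₂)
    (Set.forall_mem_image.mpr hmin₁) (Set.forall_mem_image.mpr hmin₂)
  simp only [ContinuousLinearMap.comp_apply, ContinuousLinearMap.adjoint_inner_right, map_sub L]
  exact h

theorem nonlinear_pbdw_stability_general {Φ : Set E} (hΦ : Convex ℝ Φ) {W : F →L[ℝ] F}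
    (hW : IsSelfAdjoint W) (L : E →L[ℝ] F) {C : ℝ} (hC : 0 ≤ C)
    (hbound : ∀ z₁ ∈ Φ, ∀ z₂ ∈ Φ,
      ‖z₁ - z₂‖ ^ 2 ≤ C * ⟪z₁ - z₂, (adjoint L ∘L W ∘L L) (z₁ - z₂)⟫)
    {y₁ y₂ : F} {z₁ z₂ : E} (hz₁ : z₁ ∈ Φ) (hz₂ : z₂ ∈ Φ)
    (hmin₁ : IsMinOn (fun z ↦ ⟪L z - y₁, W (L z - y₁)⟫) Φ z₁)
    (hmin₂ : IsMinOn (fun z ↦ ⟪L z - y₂, W (L z - y₂)⟫) Φ z₂) :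
    ‖z₁ - z₂‖ ≤ ‖adjoint L ∘L W‖ * C * ‖y₁ - y₂‖ := by
  refine le_of_sq_le_mul_of_nonneg (by positivity) ?_
  calc ‖z₁ - z₂‖ ^ 2
    _ ≤ C * ⟪z₁ - z₂, (adjoint L ∘L W ∘L L) (z₁ - z₂)⟫ := hbound z₁ hz₁ z₂ hz₂
    _ ≤ C * ⟪z₁ - z₂, (adjoint L ∘L W) (y₁ - y₂)⟫ := by
      gcongr
      exact inner_adjoint_comp_sub_le_of_isMinOn hΦ hW L hz₁ hz₂ hmin₁ hmin₂
    _ ≤ C * (‖z₁ - z₂‖ * (‖adjoint L ∘L W‖ * ‖y₁ - y₂‖)) := by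
      gcongr
      exact (real_inner_le_norm _ _).trans (by gcongr; exact ContinuousLinearMap.le_opNorm _ _)
    _ = ‖z₁ - z₂‖ * (‖adjoint L ∘L W‖ * C * ‖y₁ - y₂‖) := by ring

end HilbertSpace

/-- **Proposition 3.8: stability of the nonlinear PBDW background.**
Let Φ ⊆ ℝ^N be convex, W symmetric positive definite, Q = LᵀWL, and C > 0
with ‖z₁ − z₂‖₂² ≤ C (z₁ − z₂)ᵀQ(z₁ − z₂) on Φ.  If ẑ_i minimizes
(Lz − y_i)ᵀW(Lz − y_i) over Φ (i = 1, 2), then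
‖ẑ₁ − ẑ₂‖₂ ≤ ‖LᵀW‖₂ · C · ‖y₁ − y₂‖₂. -/
theorem nonlinear_pbdw_stability
    {M N : ℕ} (Φ : Set (Fin N → ℝ)) (hΦconv : Convex ℝ Φ)
    (W : Matrix (Fin M) (Fin M) ℝ) (hW : W.PosDef)
    (L : Matrix (Fin M) (Fin N) ℝ)
    (C : ℝ) (hC : 0 < C)
    (hCbound : ∀ z₁ ∈ Φ, ∀ z₂ ∈ Φ,
      (z₁ - z₂) ⬝ᵥ (z₁ - z₂)
        ≤ C * ((z₁ - z₂) ⬝ᵥ (Lᵀ * W * L).mulVec (z₁ - z₂)))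
    (y₁ y₂ : Fin M → ℝ) (zhat₁ zhat₂ : Fin N → ℝ)
    (hmem₁ : zhat₁ ∈ Φ) (hmem₂ : zhat₂ ∈ Φ)
    (hopt₁ : ∀ z ∈ Φ,
      (L.mulVec zhat₁ - y₁) ⬝ᵥ W.mulVec (L.mulVec zhat₁ - y₁)
        ≤ (L.mulVec z - y₁) ⬝ᵥ W.mulVec (L.mulVec z - y₁))
    (hopt₂ : ∀ z ∈ Φ,
      (L.mulVec zhat₂ - y₂) ⬝ᵥ W.mulVec (L.mulVec zhat₂ - y₂)
        ≤ (L.mulVec z - y₂) ⬝ᵥ W.mulVec (L.mulVec z - y₂)) :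
    Real.sqrt ((zhat₁ - zhat₂) ⬝ᵥ (zhat₁ - zhat₂))
      ≤ sMax (Lᵀ * W) * C * Real.sqrt ((y₁ - y₂) ⬝ᵥ (y₁ - y₂)) := by
  have h := nonlinear_pbdw_stability_general
    (hΦconv.linear_preimage (WithLp.linearEquiv 2 ℝ (Fin N → ℝ)).toLinearMap)
    (isSelfAdjoint_euclideanCLM hW.isHermitian) (euclideanCLM L) hC.le
    (y₁ := WithLp.toLp 2 y₁) (y₂ := WithLp.toLp 2 y₂)
    (z₁ := WithLp.toLp 2 zhat₁) (z₂ := WithLp.toLp 2 zhat₂)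
  simp only [adjoint_euclideanCLM, ← euclideanCLM_mul, ← Matrix.mul_assoc, inner_euclideanCLM,
    ofLp_euclideanCLM, euclideanNorm_sq_eq_dotProduct, WithLp.ofLp_sub] at h
  simpa only [sMax_eq_norm_euclideanCLM, euclideanNorm_eq_sqrt_dotProduct, WithLp.ofLp_sub] using
    h (fun _ hz₁ _ hz₂ ↦ hCbound _ hz₁ _ hz₂) hmem₁ hmem₂ (fun _ ↦ hopt₁ _) (fun _ ↦ hopt₂ _)
end

section
/- Let Z be a closed subspace of U, let ℓ: U → ℝ^M be a bounded linear map, let y ∈ ℝ^M and δ > 0, and define K(δ, y) = { u ∈ U : ‖Π_{Z^⊥}(u)‖ ≤ δ and ℓ(u) = y }, where Π_{Z^⊥} is the orthogonal projection onto the orthogonal complement of Z. Assume K(δ, y) is nonempty. Let û ∈ U satisfy ℓ(û) = y and ‖Π_{Z^⊥}(û)‖ ≤ ‖Π_{Z^⊥}(u)‖ for all u ∈ U with ℓ(u) = y (this characterizes the PBDW estimate with ξ = 0). Then for every w ∈ U: sup over u ∈ K(δ, y) of ‖u − û‖ is at most sup over u ∈ K(δ, y) of ‖u − w‖; i.e.,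 û is a Chebyshev center of K(δ, y) and the PBDW estimate is the minimax-optimal recovery. (Proposition 3.3.) -/
/-!
The set `K(δ, y)` is symmetric about `û`: minimality of `‖Π û‖` on the fibre `ℓ u = y` makes `Π û`
orthogonal to `Π (ker ℓ)`, so replacing `u = û + h` by `û - h` preserves both `ℓ u` and `‖Π u‖`.
A center of symmetry is a Chebyshev center, because the two reflected points `u` and `2û - u` are
`2‖u - û‖` apart, so that no `w` is closer than `‖u - û‖` to both of them.
-/

open Set
open scoped RealInnerProductSpace

section ChebyshevCenter

theorem isBounded_iff_bddAbove_dist_image {X : Type*} [PseudoMetricSpace X] {K : Set X} (c : X) :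
    Bornology.IsBounded K ↔ BddAbove ((dist · c) '' K) := by
  simp only [Metric.isBounded_iff_subset_closedBall c, bddAbove_def, forall_mem_image, subset_def,
    Metric.mem_closedBall]

variable {V X : Type*} [SeminormedAddCommGroup V] [NormedSpace ℝ V] [PseudoMetricSpace X]
  [NormedAddTorsor V X] {K : Set X} {c : X}

theorem dist_le_of_mapsTo_pointReflection (hK : MapsTo (Equiv.pointReflection c) K K) {w : X}
    {r : ℝ} (hr : ∀ x ∈ K, dist x w ≤ r) {x : X} (hx : x ∈ K) : dist x c ≤ r := by
  have two_mul_dist_le : 2 * dist x c ≤ r + r :=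
    calc 2 * dist x c = dist x (Equiv.pointReflection c x) := by
          rw [dist_comm x (Equiv.pointReflection c x), dist_pointReflection_right ℝ,
            Real.norm_two, dist_comm]
      _ ≤ dist x w + dist (Equiv.pointReflection c x) w := dist_triangle_right _ _ _
      _ ≤ r + r := add_le_add (hr x hx) (hr _ (hK hx))
  linarith

theorem sSup_dist_image_le_of_mapsTo_pointReflection (hne : K.Nonempty)
    (hK : MapsTo (Equiv.pointReflection c) K K) (w : X) :
    sSup ((dist · c) '' K) ≤ sSup ((dist · w) '' K) := by
  by_cases hbdd : Bornology.IsBounded K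
  · have hbdd_w := (isBounded_iff_bddAbove_dist_image w).1 hbdd
    refine csSup_le (hne.image _) (forall_mem_image.2 fun x hx ↦ ?_)
    exact dist_le_of_mapsTo_pointReflection hK
      (fun z hz ↦ le_csSup hbdd_w (mem_image_of_mem _ hz)) hx
  · -- Both suprema are infinite here, and `sSup` gives each of them the junk value `0`.
    rw [Real.sSup_of_not_bddAbove (mt (isBounded_iff_bddAbove_dist_image c).2 hbdd),
      Real.sSup_of_not_bddAbove (mt (isBounded_iff_bddAbove_dist_image w).2 hbdd)]

end ChebyshevCenter

theorem real_inner_eq_zero_of_forall_norm_le_norm_add_smul {E : Type*} [SeminormedAddCommGroup E]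
    [InnerProductSpace ℝ E] {x h : E} (hmin : ∀ t : ℝ, ‖x‖ ≤ ‖x + t • h‖) : ⟪x, h⟫ = 0 := by
  have quadratic_nonneg (t : ℝ) : 0 ≤ ‖h‖ ^ 2 * (t * t) + 2 * ⟪x, h⟫ * t + 0 := by
    have norm_sq_le : ‖x‖ ^ 2 ≤ ‖x + t • h‖ ^ 2 := by gcongr; exact hmin t
    rw [norm_add_sq_real, real_inner_smul_right, norm_smul, mul_pow, Real.norm_eq_abs,
      sq_abs] at norm_sq_le
    linarith
  have discrim_nonpos := discrim_le_zero quadratic_nonneg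
  rw [discrim] at discrim_nonpos
  exact (sq_nonpos_iff _).1 (by linarith)

section RecoverySet

variable {U E F : Type*} [SeminormedAddCommGroup E] [InnerProductSpace ℝ E] [AddCommGroup F]
  [Module ℝ F]

/-- The set `K(δ, y)` of states that have the data `l u = y` and a model error `‖P u‖` of at most
`δ`. In the paper `P` is the orthogonal projection onto `Zᗮ`; here it is any linear map into an
inner product space. -/
def recoverySet [AddCommGroup U] [Module ℝ U] (P : U →ₗ[ℝ] E) (l : U →ₗ[ℝ] F) (δ : ℝ) (y : F) :
    Set U :=
  {u | ‖P u‖ ≤ δ ∧ l u = y}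

section Symmetry

variable [AddCommGroup U] [Module ℝ U] {P : U →ₗ[ℝ] E} {l : U →ₗ[ℝ] F} {y : F} {uhat : U}

theorem inner_map_eq_zero_of_forall_norm_map_le (huhat : l uhat = y)
    (hmin : ∀ u, l u = y → ‖P uhat‖ ≤ ‖P u‖) {h : U} (hh : l h = 0) : ⟪P uhat, P h⟫ = 0 := by
  refine real_inner_eq_zero_of_forall_norm_le_norm_add_smul fun t ↦ ?_
  rw [← map_smul, ← map_add]
  exact hmin _ (by rw [map_add, map_smul, hh, smul_zero, add_zero, huhat])

theorem mapsTo_pointReflection_recoverySet (huhat : l uhat = y)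
    (hmin : ∀ u, l u = y → ‖P uhat‖ ≤ ‖P u‖) (δ : ℝ) :
    MapsTo (Equiv.pointReflection uhat) (recoverySet P l δ y) (recoverySet P l δ y) := by
  rintro u ⟨hu_norm, hu_data⟩
  have inner_eq_zero : ⟪P (uhat - u), P uhat⟫ = 0 := by
    rw [real_inner_comm]
    exact inner_map_eq_zero_of_forall_norm_map_le huhat hmin
      (by rw [map_sub, huhat, hu_data, sub_self])
  have norm_map_eq : ‖P (Equiv.pointReflection uhat u)‖ = ‖P u‖ :=
    calc ‖P (Equiv.pointReflection uhat u)‖ = ‖P uhat + P (uhat - u)‖ := by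
          rw [Equiv.pointReflection_apply, vsub_eq_sub, vadd_eq_add, map_add, add_comm]
      _ = ‖P uhat - P (uhat - u)‖ := (norm_sub_eq_norm_add inner_eq_zero).symm
      _ = ‖P u‖ := by rw [← map_sub, sub_sub_cancel]
  refine ⟨norm_map_eq.trans_le hu_norm, ?_⟩
  rw [Equiv.pointReflection_apply, vsub_eq_sub, vadd_eq_add, map_add, map_sub, huhat, hu_data,
    sub_self, zero_add]

end Symmetry

theorem pbdw_minimax_optimality_general [SeminormedAddCommGroup U] [NormedSpace ℝ U]
    {P : U →ₗ[ℝ] E} {l : U →ₗ[ℝ] F} {δ : ℝ} {y : F} (hne : (recoverySet P l δ y).Nonempty)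
    {uhat : U} (huhat : l uhat = y) (hmin : ∀ u, l u = y → ‖P uhat‖ ≤ ‖P u‖) (w : U) :
    sSup {r : ℝ | ∃ u ∈ recoverySet P l δ y, r = ‖u - uhat‖}
      ≤ sSup {r : ℝ | ∃ u ∈ recoverySet P l δ y, r = ‖u - w‖} := by
  simpa only [image, dist_eq_norm, eq_comm] using
    sSup_dist_image_le_of_mapsTo_pointReflection hne
      (mapsTo_pointReflection_recoverySet huhat hmin δ) w

end RecoverySet

/-- **Proposition 3.3: minimax optimality of the PBDW estimate (ξ = 0).**
Let K(δ, y) = {u ∈ U : ‖Π_{Z^⊥}u‖ ≤ δ, ℓ(u) = y} be nonempty, and let û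
satisfy ℓ(û) = y and ‖Π_{Z^⊥}û‖ ≤ ‖Π_{Z^⊥}u‖ for all u with ℓ(u) = y.  Then
for every w ∈ U, sup_{u ∈ K(δ,y)} ‖u − û‖ ≤ sup_{u ∈ K(δ,y)} ‖u − w‖. -/
theorem pbdw_minimax_optimality
    {U : Type*} [NormedAddCommGroup U] [InnerProductSpace ℝ U] [CompleteSpace U]
    {M : ℕ}
    (Z : Submodule ℝ U) (hZclosed : IsClosed (Z : Set U))
    (l : U →L[ℝ] EuclideanSpace ℝ (Fin M))
    (y : EuclideanSpace ℝ (Fin M)) (δ : ℝ) (hδ : 0 < δ)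
    (Pperp : U → U)
    (hPperp : ∀ u, Pperp u ∈ Zᗮ ∧ u - Pperp u ∈ Zᗮᗮ)
    (hne : {u : U | ‖Pperp u‖ ≤ δ ∧ l u = y}.Nonempty)
    (uhat : U) (huhat₁ : l uhat = y)
    (huhat₂ : ∀ u : U, l u = y → ‖Pperp uhat‖ ≤ ‖Pperp u‖) :
    ∀ w : U,
      sSup {r : ℝ | ∃ u : U, (‖Pperp u‖ ≤ δ ∧ l u = y) ∧ r = ‖u - uhat‖}
        ≤ sSup {r : ℝ | ∃ u : U, (‖Pperp u‖ ≤ δ ∧ l u = y) ∧ r = ‖u - w‖} := by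
  obtain rfl : Pperp = Zᗮ.starProjection := funext fun u ↦
    (Submodule.eq_starProjection_of_mem_orthogonal (hPperp u).1 (hPperp u).2).symm
  exact pbdw_minimax_optimality_general (P := Zᗮ.starProjection.toLinearMap)
    (l := l.toLinearMap) hne huhat₁ huhat₂
end
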